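/- arXiv:2001.06436 — 10 statements merged into one kernel-verified Lean document; each statement's English description precedes it below -/
import Mathlib

section
/- Let Γ and Ω be two non-parallel affine planes in ℝ³, let p be a point lying on neither plane, and let Π be the unique affine plane through p parallel to Ω. Then the set of vanishing points of Γ (with respect to the central projection from Γ to Ω through p) equals the intersection Γ ∩ Π; in particular, this set is an affine line, so all vanishing points of Γ are collinear. -/
noncomputable section

/-- Points of `ℝ³`. -/
abbrev E3 : Type := Fin 3 → ℝ

/-- An affine plane in `ℝ³`: a nonempty affine subspace whose direction has dimension 2. -/
def IsPlane (s : AffineSubspace ℝ E3) : Prop :=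
  (s : Set E3).Nonempty ∧ Module.finrank ℝ s.direction = 2

/-- An affine line in `ℝ³`: a nonempty affine subspace whose direction has dimension 1. -/
def IsLine (s : AffineSubspace ℝ E3) : Prop :=
  (s : Set E3).Nonempty ∧ Module.finrank ℝ s.direction = 1

/-- `v` is a vanishing point of the plane `Γ` with respect to the central projection from
`Γ` to `Ω` through `p`: it lies in `Γ` and the line through `p` and `v` is parallel to `Ω`. -/
def VanishingPt (Γ Ω : AffineSubspace ℝ E3) (p v : E3) : Prop :=
  v ∈ Γ ∧ v -ᵥ p ∈ Ω.direction

/-- The set of vanishing points of `Γ` (w.r.t. the central projection from `Γ` to `Ω`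
through `p`) equals `Γ ∩ Π`, where `Π` is the plane through `p` parallel to `Ω`; in
particular this set is an affine line, so all vanishing points of `Γ` are collinear. -/
theorem vanishing_set_eq_inter_and_is_line
    (Γ Ω : AffineSubspace ℝ E3) (p : E3)
    (hΓ : IsPlane Γ) (hΩ : IsPlane Ω)
    (hnp : Γ.direction ≠ Ω.direction)
    (hpΓ : p ∉ Γ) (hpΩ : p ∉ Ω) :
    {v : E3 | VanishingPt Γ Ω p v} =
        ↑(Γ ⊓ AffineSubspace.mk' p Ω.direction) ∧
      IsLine (Γ ⊓ AffineSubspace.mk' p Ω.direction) ∧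
      Collinear ℝ {v : E3 | VanishingPt Γ Ω p v} := by
  have hset : {v : E3 | VanishingPt Γ Ω p v} =
      ((Γ ⊓ AffineSubspace.mk' p Ω.direction : AffineSubspace ℝ E3) : Set E3) := by
    ext v
    simp only [Set.mem_ofPred_eq, VanishingPt, SetLike.mem_coe, AffineSubspace.mem_inf_iff,
      AffineSubspace.mem_mk']
  obtain ⟨⟨a, ha⟩, hΓ2⟩ := hΓ
  obtain ⟨-, hΩ2⟩ := hΩ
  have ha' : a ∈ Γ := ha
  have hE : Module.finrank ℝ (Fin 3 → ℝ) = 3 := by simp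
  have hlt : Γ.direction < Γ.direction ⊔ Ω.direction := by
    refine lt_of_le_of_ne le_sup_left fun h => hnp ?_
    have hle : Ω.direction ≤ Γ.direction := by rw [h]; exact le_sup_right
    exact (Submodule.eq_of_le_of_finrank_eq hle (by rw [hΓ2, hΩ2])).symm
  have h3 := Submodule.finrank_lt_finrank_of_lt hlt
  have hle3 := Submodule.finrank_le (Γ.direction ⊔ Ω.direction)
  have hsum := Submodule.finrank_sup_add_finrank_inf_eq Γ.direction Ω.direction
  have htop : Γ.direction ⊔ Ω.direction = ⊤ :=
    Submodule.eq_top_of_finrank_eq (by omega)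
  have hne : ∃ q, q ∈ Γ ∧ q ∈ AffineSubspace.mk' p Ω.direction := by
    have hm : p -ᵥ a ∈ Γ.direction ⊔ Ω.direction := by rw [htop]; trivial
    obtain ⟨y, hy, z, hz, hyz⟩ := Submodule.mem_sup.1 hm
    refine ⟨y +ᵥ a, AffineSubspace.vadd_mem_of_mem_direction hy ha', ?_⟩
    rw [AffineSubspace.mem_mk']
    have : (y +ᵥ a) -ᵥ p = -z := by
      simp only [vsub_eq_sub, vadd_eq_add] at hyz ⊢
      rw [show p = y + z + a by rw [hyz]; abel]
      abel
    rw [this]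
    exact Submodule.neg_mem _ hz
  obtain ⟨q, hq1, hq2⟩ := hne
  have hdir : Module.finrank ℝ (Γ ⊓ AffineSubspace.mk' p Ω.direction).direction = 1 := by
    rw [AffineSubspace.direction_inf_of_mem hq1 hq2, AffineSubspace.direction_mk']
    omega
  refine ⟨hset, ⟨⟨q, hq1, hq2⟩, hdir⟩, ?_⟩
  rw [hset, collinear_iff_finrank_le_one]
  exact hdir.le
end
end

section
/- Let Γ and Ω be two non-parallel affine planes in ℝ³, let p be a point lying on neither plane, let f be the central projection from Γ to Ω through p, let l be the vanishing line of Γ and let m be the vanishing line of Ω. Then f restricts to a homeomorphism from Γ \ l onto Ω \ m (with the subspace topologies inherited from ℝ³). -/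
noncomputable section

/-- `f` is the central projection from `Γ` to `Ω` through `p`: every non-vanishing point
`a` of `Γ` is sent to the (unique) intersection point of the line through `p` and `a`
with `Ω`. -/
def IsCentralProj (Γ Ω : AffineSubspace ℝ E3) (p : E3) (f : E3 → E3) : Prop :=
  ∀ a ∈ Γ, a -ᵥ p ∉ Ω.direction → f a ∈ Ω ∧ f a ∈ affineSpan ℝ {p, a}


theorem plane_functional (s : AffineSubspace ℝ E3) (p : E3) (hs : IsPlane s) (hp : p ∉ s) :
    ∃ φ : E3 →ₗ[ℝ] ℝ, (∀ v, v ∈ s.direction ↔ φ v = 0) ∧ (∀ x, x ∈ s ↔ φ (x - p) = 1) := by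
  obtain ⟨⟨q, hq⟩, hd⟩ := hs
  have hq' : q ∈ s := hq
  have hw : q - p ∉ s.direction := by
    intro h
    apply hp
    have h2 := AffineSubspace.vadd_mem_of_mem_direction (s.direction.neg_mem h) hq'
    simpa using h2
  obtain ⟨g, hg, hg0⟩ := Submodule.exists_le_ker_of_notMem hw
  have hker : s.direction = LinearMap.ker g := by
    apply Submodule.eq_of_le_of_finrank_eq hg0
    have h1 := LinearMap.finrank_range_add_finrank_ker g
    have h2 : LinearMap.range g = ⊤ := by
      apply LinearMap.range_eq_top.2
      apply LinearMap.surjective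
      intro h
      exact hg (by simp [h])
    rw [h2, finrank_top] at h1
    rw [Module.finrank_self, Module.finrank_fin_fun] at h1
    rw [hd]; linarith
  have key : ∀ v, v ∈ s.direction ↔ ((g (q - p))⁻¹ • g) v = 0 := by
    intro v
    rw [hker, LinearMap.mem_ker]
    simp only [LinearMap.smul_apply, smul_eq_mul, mul_eq_zero, inv_eq_zero, hg, false_or]
  refine ⟨(g (q - p))⁻¹ • g, key, fun x => ?_⟩
  have h1 : ((g (q - p))⁻¹ • g) (q - p) = 1 := by
    simp only [LinearMap.smul_apply, smul_eq_mul]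
    exact inv_mul_cancel₀ hg
  have h2 : x ∈ s ↔ x - q ∈ s.direction :=
    (AffineSubspace.vsub_right_mem_direction_iff_mem hq' x).symm
  rw [h2, key, show x - q = (x - p) - (q - p) by abel, map_sub, h1, sub_eq_zero]

/-- Radial rescaling about `p`. -/
def radial (φ : E3 →ₗ[ℝ] ℝ) (p a : E3) : E3 := (φ (a - p))⁻¹ • (a - p) + p

theorem radial_apply (φ ψ : E3 →ₗ[ℝ] ℝ) (p a : E3) :
    ψ (radial φ p a - p) = (φ (a - p))⁻¹ * ψ (a - p) := by
  simp only [radial, add_sub_cancel_right, map_smul, smul_eq_mul]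

theorem radial_radial (φ ψ : E3 →ₗ[ℝ] ℝ) (p a : E3) (h : φ (a - p) ≠ 0)
    (h1 : ψ (a - p) = 1) : radial ψ p (radial φ p a) = a := by
  rw [radial, radial_apply, h1]
  rw [mul_one, inv_inv, radial, add_sub_cancel_right, smul_smul, mul_inv_cancel₀ h, one_smul,
    sub_add_cancel]

theorem radial_cont (φ : E3 →ₗ[ℝ] ℝ) (p : E3) {S : Set E3} (hS : ∀ a ∈ S, φ (a - p) ≠ 0) :
    Continuous (fun x : S => radial φ p x) := by
  have hc : Continuous φ := φ.continuous_of_finiteDimensional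
  unfold radial
  have h1 : Continuous (fun x : S => (x : E3) - p) := by fun_prop
  exact (((hc.comp h1).inv₀ fun x => hS x x.2).smul h1).add continuous_const

/-- The central projection `f` restricts to a homeomorphism from `Γ` minus its vanishing
line onto `Ω` minus its vanishing line (with the subspace topologies from `ℝ³`). -/
theorem centralProj_homeomorph
    (Γ Ω : AffineSubspace ℝ E3) (p : E3) (f : E3 → E3)
    (hΓ : IsPlane Γ) (hΩ : IsPlane Ω)
    (hnp : Γ.direction ≠ Ω.direction)
    (hpΓ : p ∉ Γ) (hpΩ : p ∉ Ω)
    (hf : IsCentralProj Γ Ω p f) :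
    ∃ h : ({a : E3 | a ∈ Γ ∧ ¬ VanishingPt Γ Ω p a} ≃ₜ
           {b : E3 | b ∈ Ω ∧ ¬ VanishingPt Ω Γ p b}),
      ∀ x, (h x : E3) = f (x : E3) := by
  obtain ⟨γ, hγ0, hγ1⟩ := plane_functional Γ p hΓ hpΓ
  obtain ⟨ω, hω0, hω1⟩ := plane_functional Ω p hΩ hpΩ
  have hA : ∀ a, a ∈ {a : E3 | a ∈ Γ ∧ ¬ VanishingPt Γ Ω p a} ↔
      γ (a - p) = 1 ∧ ω (a - p) ≠ 0 := by
    intro a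
    simp only [Set.mem_ofPred_eq, VanishingPt, vsub_eq_sub, hω0, hγ1]
    tauto
  have hB : ∀ a, a ∈ {b : E3 | b ∈ Ω ∧ ¬ VanishingPt Ω Γ p b} ↔
      ω (a - p) = 1 ∧ γ (a - p) ≠ 0 := by
    intro a
    simp only [Set.mem_ofPred_eq, VanishingPt, vsub_eq_sub, hγ0, hω1]
    tauto
  refine ⟨{ toFun := fun x => ⟨radial ω p x, ?_⟩
            invFun := fun x => ⟨radial γ p x, ?_⟩
            left_inv := ?_
            right_inv := ?_
            continuous_toFun := ?_
            continuous_invFun := ?_ }, ?_⟩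
  · obtain ⟨h1, h2⟩ := (hA x).1 x.2
    rw [hB, radial_apply, radial_apply, h1]
    exact ⟨inv_mul_cancel₀ h2, by rw [mul_one]; exact inv_ne_zero h2⟩
  · obtain ⟨h1, h2⟩ := (hB x).1 x.2
    rw [hA, radial_apply, radial_apply, h1]
    exact ⟨inv_mul_cancel₀ h2, by rw [mul_one]; exact inv_ne_zero h2⟩
  · intro x
    obtain ⟨h1, h2⟩ := (hA x).1 x.2
    exact Subtype.ext (radial_radial ω γ p x h2 h1)
  · intro x
    obtain ⟨h1, h2⟩ := (hB x).1 x.2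
    exact Subtype.ext (radial_radial γ ω p x h2 h1)
  · exact (radial_cont ω p fun a ha => ((hA a).1 ha).2).subtype_mk _
  · exact (radial_cont γ p fun a ha => ((hB a).1 ha).2).subtype_mk _
  · intro x
    obtain ⟨h1, h2⟩ := (hA x).1 x.2
    obtain ⟨h3, h4⟩ := hf x ((hγ1 _).2 h1) (fun h => h2 ((hω0 _).1 h))
    obtain ⟨r, hr⟩ := mem_affineSpan_pair_iff_exists_lineMap_eq.1 h4
    rw [AffineMap.lineMap_apply, vsub_eq_sub, vadd_eq_add] at hr
    rw [hω1, ← hr, add_sub_cancel_right, map_smul, smul_eq_mul] at h3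
    change radial ω p x = _
    rw [← hr, radial, eq_inv_of_mul_eq_one_left h3]
end
end

section
/- Let Γ and Ω be two non-parallel affine planes in ℝ³, let p be a point lying on neither plane, let f be the central projection from Γ to Ω through p, and let g be the central projection from Ω to Γ through p. For every point a ∈ Γ that is not a vanishing point of Γ, the point f(a) is not a vanishing point of Ω, g(f(a)) is defined, and g(f(a)) = a. In other words, the inverse of f (away from the vanishing lines) is itself a central projection through p. -/
noncomputable section

/-- If `f` is the central projection from `Γ` to `Ω` through `p` and `g` is the central
projection from `Ω` to `Γ` through `p`, then for every non-vanishing point `a` of `Γ`,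
the image `f a` is a non-vanishing point of `Ω` (so `g (f a)` is defined) and
`g (f a) = a`: the inverse of `f` is itself a central projection through `p`. -/
theorem centralProj_inverse
    (Γ Ω : AffineSubspace ℝ E3) (p : E3) (f g : E3 → E3)
    (hΓ : IsPlane Γ) (hΩ : IsPlane Ω)
    (hnp : Γ.direction ≠ Ω.direction)
    (hpΓ : p ∉ Γ) (hpΩ : p ∉ Ω)
    (hf : IsCentralProj Γ Ω p f) (hg : IsCentralProj Ω Γ p g) :
    ∀ a ∈ Γ, a -ᵥ p ∉ Ω.direction →
      f a ∈ Ω ∧ ¬ VanishingPt Ω Γ p (f a) ∧ g (f a) = a := by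
  intro a ha hav
  obtain ⟨h1, h2⟩ := hf a ha hav
  -- the line through `p` and `a` is not parallel to `Γ`
  have hapΓ : a -ᵥ p ∉ Γ.direction := by
    intro h
    apply hpΓ
    have h3 := AffineSubspace.vadd_mem_of_mem_direction (Γ.direction.neg_mem h) ha
    simpa using h3
  obtain ⟨t, ht⟩ := mem_affineSpan_pair_iff_exists_lineMap_eq.1 h2
  have ht' : f a = t • (a -ᵥ p) + p := by
    rw [← ht, AffineMap.lineMap_apply]; rfl
  have ht0 : t ≠ 0 := by
    rintro rfl
    apply hpΩ
    have : f a = p := by simpa using ht'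
    rwa [this] at h1
  have hfa : f a -ᵥ p ∉ Γ.direction := by
    intro h
    apply hapΓ
    rw [ht'] at h
    have h3 : t • (a -ᵥ p) ∈ Γ.direction := by simpa using h
    exact (Γ.direction.smul_mem_iff ht0).1 h3
  refine ⟨h1, fun h => hfa h.2, ?_⟩
  obtain ⟨h4, h5⟩ := hg (f a) h1 hfa
  obtain ⟨s, hs⟩ := mem_affineSpan_pair_iff_exists_lineMap_eq.1 h5
  have hs' : g (f a) = s • (f a -ᵥ p) + p := by
    rw [← hs, AffineMap.lineMap_apply]; rfl
  have h6 : g (f a) -ᵥ a = (s * t - 1) • (a -ᵥ p) := by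
    rw [hs', ht']
    simp only [vsub_eq_sub]
    module
  have h7 : g (f a) -ᵥ a ∈ Γ.direction := AffineSubspace.vsub_mem_direction h4 ha
  have h8 : s * t - 1 = 0 := by
    by_contra hne
    rw [h6] at h7
    exact hapΓ ((Γ.direction.smul_mem_iff hne).1 h7)
  rw [h8, zero_smul] at h6
  exact vsub_eq_zero_iff_eq.1 h6
end
end

section
/- Let Γ and Ω be two non-parallel affine planes in ℝ³, let p be a point lying on neither plane, let f be the central projection from Γ to Ω through p, and let n be the vanishing line of Γ. Let L and M be two distinct affine lines contained in Γ, neither equal to n, and let L' and M' be the affine lines of Ω containing the images under f of the non-vanishing points of L and of M, respectively. If L' and M' are parallel and disjoint, then either both L and M are parallel to n, or L and M meet at a vanishing point of Γ. -/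
noncomputable section

open scoped Affine

/-- `L'` is the image line of the line `L ⊆ Γ` under the central projection `f`: the
affine line of `Ω` containing the images of all non-vanishing points of `L`. -/
def IsImageLine (Γ Ω : AffineSubspace ℝ E3) (p : E3) (f : E3 → E3)
    (L L' : AffineSubspace ℝ E3) : Prop :=
  IsLine L' ∧ L' ≤ Ω ∧ ∀ x ∈ L, x -ᵥ p ∉ Ω.direction → f x ∈ L'

theorem exists_functional (W : Submodule ℝ E3) (hW : Module.finrank ℝ W = 2) :
    ∃ φ : E3 →ₗ[ℝ] ℝ, ∀ x, x ∈ W ↔ φ x = 0 := by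
  have hlt : W < ⊤ := by
    rw [lt_top_iff_ne_top]
    rintro rfl
    simp at hW
  obtain ⟨φ, hφ, hle⟩ := Submodule.exists_le_ker_of_lt_top W hlt
  have h1 := LinearMap.finrank_range_add_finrank_ker φ
  have h2 : LinearMap.range φ = ⊤ := LinearMap.range_eq_top.2 (LinearMap.surjective hφ)
  rw [h2] at h1
  simp at h1
  have h3 : W = LinearMap.ker φ :=
    Submodule.eq_of_le_of_finrank_eq hle (by omega)
  refine ⟨φ, fun x => ?_⟩
  rw [h3, LinearMap.mem_ker]

theorem line_cases (Γ Ω : AffineSubspace ℝ E3) (p : E3) (f : E3 → E3)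
    (hΩ : IsPlane Ω) (hpΩ : p ∉ Ω)
    (hf : IsCentralProj Γ Ω p f)
    (n : AffineSubspace ℝ E3) (hn : IsLine n)
    (hnvan : (n : Set E3) = {v : E3 | VanishingPt Γ Ω p v})
    (L L' : AffineSubspace ℝ E3) (hL : IsLine L) (hLΓ : L ≤ Γ) (hLn : L ≠ n)
    (hL' : IsImageLine Γ Ω p f L L') :
    (∃ d : E3, d ≠ 0 ∧ d ∈ Γ.direction ∧ d ∈ L'.direction ∧ L ∥ n) ∨
      ∃ v ∈ L, VanishingPt Γ Ω p v ∧ v - p ∈ L'.direction := by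
  obtain ⟨φ, hφ⟩ := exists_functional Ω.direction hΩ.2
  obtain ⟨q, hq⟩ := hΩ.1
  have hmem : ∀ v, v ∈ n ↔ VanishingPt Γ Ω p v := fun v => by
    have := Set.ext_iff.1 hnvan v
    simpa using this
  have hc : φ (q - p) ≠ 0 := fun h => by
    rw [← hφ] at h
    apply hpΩ
    have := AffineSubspace.vadd_mem_of_mem_direction (Submodule.neg_mem _ h) hq
    simpa using this
  have key : ∀ x ∈ L, φ (x - p) ≠ 0 →
      p + (φ (q - p) / φ (x - p)) • (x - p) ∈ L' := by
    intro x hx hne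
    have hnd : x -ᵥ p ∉ Ω.direction := by rw [hφ]; exact hne
    obtain ⟨h1, h2⟩ := hf x (hLΓ hx) hnd
    have h3 := hL'.2.2 x hx hnd
    obtain ⟨r, hr⟩ := mem_affineSpan_pair_iff_exists_lineMap_eq.1 h2
    rw [AffineMap.lineMap_apply] at hr
    simp only [vsub_eq_sub, vadd_eq_add] at hr
    have h4 := (hφ _).1 (AffineSubspace.vsub_mem_direction h1 hq)
    have h5 : f x -ᵥ q = r • (x - p) - (q - p) := by
      rw [← hr]; simp only [vsub_eq_sub]; abel
    rw [h5, map_sub, map_smul, smul_eq_mul] at h4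
    have h6 : φ (q - p) / φ (x - p) = r := by
      field_simp; linarith
    rw [h6, add_comm, hr]
    exact h3
  obtain ⟨a, ha⟩ := hL.1
  obtain ⟨d, hd0, hd⟩ := finrank_eq_one_iff'.1 hL.2
  have hdne : (d : E3) ≠ 0 := fun h => hd0 (Subtype.ext h)
  have hmL : ∀ x ∈ L, ∀ t : ℝ, x + t • (d : E3) ∈ L := fun x hx t => by
    have := AffineSubspace.vadd_mem_of_mem_direction (Submodule.smul_mem _ t d.2) hx
    rwa [vadd_eq_add, add_comm] at this
  have hdΓ : (d : E3) ∈ Γ.direction := AffineSubspace.direction_le hLΓ d.2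
  by_cases h0 : φ d = 0
  · left
    obtain ⟨v, hv⟩ := hn.1
    have hv' := (hmem v).1 hv
    have hdn : (d : E3) ∈ n.direction := by
      have h1 : (d : E3) +ᵥ v ∈ n := by
        rw [hmem]
        refine ⟨AffineSubspace.vadd_mem_of_mem_direction hdΓ hv'.1, ?_⟩
        have h2 := (hφ _).1 hv'.2
        rw [hφ, vadd_eq_add, vsub_eq_sub, add_sub_assoc, map_add, h0, zero_add]
        exact h2
      have := AffineSubspace.vsub_mem_direction h1 hv
      simpa using this
    have hdir : L.direction = n.direction := by
      apply Submodule.eq_of_le_of_finrank_eq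
      · intro w hw
        obtain ⟨c, hc⟩ := hd ⟨w, hw⟩
        have : c • (d : E3) = w := congrArg Subtype.val hc
        rw [← this]
        exact Submodule.smul_mem _ _ hdn
      · rw [hL.2, hn.2]
    have hna : φ (a - p) ≠ 0 := fun h => hLn <| by
      refine AffineSubspace.ext_of_direction_eq hdir ⟨a, ha, ?_⟩
      exact (hmem a).2 ⟨hLΓ ha, (hφ _).2 h⟩
    refine ⟨d, hdne, hdΓ, ?_, ?_⟩
    · have e : φ (a + (1 : ℝ) • (d : E3) - p) = φ (a - p) := by
        rw [one_smul, add_sub_right_comm, map_add, h0, add_zero]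
      have k1 := key a ha hna
      have k2 := key _ (hmL a ha 1) (by rw [e]; exact hna)
      rw [e] at k2
      have k3 := AffineSubspace.vsub_mem_direction k2 k1
      have k4 := Submodule.smul_mem _ (φ (a - p) / φ (q - p)) k3
      convert k4 using 1
      rw [vsub_eq_sub, add_sub_add_left_eq_sub, ← smul_sub, smul_smul]
      rw [div_mul_div_cancel₀ hc, div_self hna]
      simp
    · exact (AffineSubspace.parallel_iff_direction_eq_and_eq_bot_iff_eq_bot).2
        ⟨hdir, by
          have h1 := (AffineSubspace.nonempty_iff_ne_bot L).1 hL.1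
          have h2 := (AffineSubspace.nonempty_iff_ne_bot n).1 hn.1
          simp [h1, h2]⟩
  · right
    obtain ⟨v, hvL, hv0⟩ : ∃ v ∈ L, φ (v - p) = 0 := by
      refine ⟨_, hmL a ha (-(φ (a - p) / φ d)), ?_⟩
      rw [add_sub_right_comm, map_add, map_smul, smul_eq_mul]
      field_simp
      ring
    refine ⟨v, hvL, ⟨hLΓ hvL, (hφ _).2 hv0⟩, ?_⟩
    have e : ∀ t : ℝ, φ (v + t • (d : E3) - p) = t * φ d := fun t => by
      rw [add_sub_right_comm, map_add, map_smul, smul_eq_mul, hv0, zero_add]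
    have k1 := key _ (hmL v hvL 1) (by rw [e]; simpa using h0)
    have k2 := key _ (hmL v hvL 2) (by rw [e]; simpa using h0)
    rw [e] at k1 k2
    have k3 := AffineSubspace.vsub_mem_direction k1 k2
    have k4 := Submodule.smul_mem _ (2 * φ d / φ (q - p)) k3
    convert k4 using 1
    ext i
    simp only [vsub_eq_sub, Pi.sub_apply, Pi.add_apply, Pi.smul_apply, smul_eq_mul]
    field_simp
    ring

theorem not_both (Γ : AffineSubspace ℝ E3) (p : E3) (hpΓ : p ∉ Γ) (W : Submodule ℝ E3)
    (hW : Module.finrank ℝ W = 1) (d v : E3) (hd0 : d ≠ 0) (hdΓ : d ∈ Γ.direction)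
    (hdW : d ∈ W) (hv : v ∈ Γ) (hvW : v - p ∈ W) : False := by
  have h0 : (⟨d, hdW⟩ : W) ≠ 0 := fun h => hd0 (congrArg Subtype.val h)
  obtain ⟨c, hc⟩ := (finrank_eq_one_iff_of_nonzero' _ h0).1 hW ⟨v - p, hvW⟩
  have hc' : c • d = v - p := congrArg Subtype.val hc
  apply hpΓ
  have := AffineSubspace.vadd_mem_of_mem_direction
    (Submodule.neg_mem _ (Submodule.smul_mem _ c hdΓ)) hv
  rw [hc'] at this
  simpa using this

/-- If the image lines `L'` and `M'` of two distinct lines `L, M ⊆ Γ` (neither equal to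
the vanishing line `n` of `Γ`) are parallel and disjoint, then either both `L` and `M`
are parallel to `n`, or `L` and `M` meet at a vanishing point of `Γ`. -/
theorem centralProj_parallel_images
    (Γ Ω : AffineSubspace ℝ E3) (p : E3) (f : E3 → E3)
    (hΓ : IsPlane Γ) (hΩ : IsPlane Ω)
    (hnp : Γ.direction ≠ Ω.direction)
    (hpΓ : p ∉ Γ) (hpΩ : p ∉ Ω)
    (hf : IsCentralProj Γ Ω p f)
    (n : AffineSubspace ℝ E3) (hn : IsLine n)
    (hnvan : (n : Set E3) = {v : E3 | VanishingPt Γ Ω p v})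
    (L M L' M' : AffineSubspace ℝ E3)
    (hL : IsLine L) (hM : IsLine M) (hLΓ : L ≤ Γ) (hMΓ : M ≤ Γ)
    (hLM : L ≠ M) (hLn : L ≠ n) (hMn : M ≠ n)
    (hL' : IsImageLine Γ Ω p f L L') (hM' : IsImageLine Γ Ω p f M M')
    (hpar : L' ∥ M') (hdisj : (L' : Set E3) ∩ (M' : Set E3) = ∅) :
    (L ∥ n ∧ M ∥ n) ∨ ∃ v, v ∈ L ∧ v ∈ M ∧ VanishingPt Γ Ω p v := by
  have hdir : L'.direction = M'.direction := hpar.direction_eq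
  have hW := hL'.1.2
  rcases line_cases Γ Ω p f hΩ hpΩ hf n hn hnvan L L' hL hLΓ hLn hL' with
    ⟨d, hd0, hdΓ, hdW, hLp⟩ | ⟨v, hvL, hv, hvW⟩ <;>
  rcases line_cases Γ Ω p f hΩ hpΩ hf n hn hnvan M M' hM hMΓ hMn hM' with
    ⟨e, he0, heΓ, heW, hMp⟩ | ⟨u, huM, hu, huW⟩
  · exact Or.inl ⟨hLp, hMp⟩
  · exact (not_both Γ p hpΓ _ hW d u hd0 hdΓ hdW hu.1 (hdir ▸ huW)).elim
  · exact (not_both Γ p hpΓ _ hW e v he0 heΓ (hdir ▸ heW) hv.1 hvW).elim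
  · right
    by_cases h : v = u
    · exact ⟨v, hvL, h ▸ huM, hv⟩
    · refine (not_both Γ p hpΓ _ hW (v - u) v (sub_ne_zero.2 h)
        (AffineSubspace.vsub_mem_direction hv.1 hu.1) ?_ hv.1 hvW).elim
      have := Submodule.sub_mem _ hvW (hdir ▸ huW)
      simpa using this
end
end

section
/- Let Γ and Ω be two non-parallel affine planes in ℝ³, let p be a point lying on neither plane, let f be the central projection from Γ to Ω through p, and let n be the vanishing line of Γ. Let L and M be two affine lines contained in Γ, neither equal to n, and suppose L and M meet at a point q that is not a vanishing point of Γ. Then the image lines L' and M' of L and M meet at the point f(q), which is not a vanishing point of Ω. -/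
noncomputable section

open scoped Affine

/-- If two lines `L, M ⊆ Γ` (neither equal to the vanishing line `n` of `Γ`) meet at a
point `q` that is not a vanishing point of `Γ`, then their image lines `L'` and `M'` meet
at the point `f q`, which is not a vanishing point of `Ω`. -/
theorem centralProj_meeting_images
    (Γ Ω : AffineSubspace ℝ E3) (p : E3) (f : E3 → E3)
    (hΓ : IsPlane Γ) (hΩ : IsPlane Ω)
    (hnp : Γ.direction ≠ Ω.direction)
    (hpΓ : p ∉ Γ) (hpΩ : p ∉ Ω)
    (hf : IsCentralProj Γ Ω p f)
    (n : AffineSubspace ℝ E3) (hn : IsLine n)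
    (hnvan : (n : Set E3) = {v : E3 | VanishingPt Γ Ω p v})
    (L M L' M' : AffineSubspace ℝ E3)
    (hL : IsLine L) (hM : IsLine M) (hLΓ : L ≤ Γ) (hMΓ : M ≤ Γ)
    (hLn : L ≠ n) (hMn : M ≠ n)
    (hL' : IsImageLine Γ Ω p f L L') (hM' : IsImageLine Γ Ω p f M M')
    (q : E3) (hqL : q ∈ L) (hqM : q ∈ M) (hq : ¬ VanishingPt Γ Ω p q) :
    f q ∈ L' ∧ f q ∈ M' ∧ ¬ VanishingPt Ω Γ p (f q) := by
  have hqΓ : q ∈ Γ := hLΓ hqL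
  have hq' : q -ᵥ p ∉ Ω.direction := fun h => hq ⟨hqΓ, h⟩
  refine ⟨hL'.2.2 q hqL hq', hM'.2.2 q hqM hq', ?_⟩
  rintro ⟨_, hd⟩
  obtain ⟨hΩq, hspan⟩ := hf q hqΓ hq'
  obtain ⟨t, ht⟩ := mem_affineSpan_pair_iff_exists_lineMap_eq.1 hspan
  have ht0 : t ≠ 0 := by
    rintro rfl
    rw [AffineMap.lineMap_apply_zero] at ht
    exact hpΩ (ht ▸ hΩq)
  rw [← ht, AffineMap.lineMap_vsub_left] at hd
  have hqp : q -ᵥ p ∈ Γ.direction := (Submodule.smul_mem_iff _ ht0).1 hd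
  apply hpΓ
  have h2 : p -ᵥ q ∈ Γ.direction := by
    rw [← neg_vsub_eq_vsub_rev]
    exact Γ.direction.neg_mem hqp
  have h3 := AffineSubspace.vadd_mem_of_mem_direction h2 hqΓ
  rwa [vsub_vadd] at h3
end
end

section
/- Let Γ and Ω be two non-parallel affine planes in ℝ³, let p be a point lying on neither plane, let f be the central projection from Γ to Ω through p, and let n be the vanishing line of Γ. Let L and M be two distinct affine lines contained in Γ, neither equal to n, and suppose L and M meet at a vanishing point v of Γ. Then the image lines L' and M' of L and M are disjoint (hence parallel): every common point of L' and M' would have to lie on the line through p and v, which is parallel to Ω. -/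
noncomputable section

open scoped Affine

/-- A one-dimensional submodule is spanned by any of its nonzero vectors. -/
theorem span_of_finrank_one (S : Submodule ℝ E3) (h : Module.finrank ℝ S = 1) (a : E3)
    (ha : a ∈ S) (h0 : a ≠ 0) : S = Submodule.span ℝ {a} := by
  symm
  apply Submodule.eq_of_le_of_finrank_eq
  · rw [Submodule.span_singleton_le_iff_mem]
    exact ha
  · rw [h, finrank_span_singleton h0]

/-- The image line has direction spanned by `v - p`, and passes through `p + a` modulo that
direction, where `a` spans the direction of `L`. -/
theorem image_line_aux (Γ Ω : AffineSubspace ℝ E3) (p : E3) (f : E3 → E3)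
    (hpΓ : p ∉ Γ) (hpΩ : p ∉ Ω)
    (hf : IsCentralProj Γ Ω p f)
    (n : AffineSubspace ℝ E3) (hn : IsLine n)
    (hnvan : (n : Set E3) = {v : E3 | VanishingPt Γ Ω p v})
    (L L' : AffineSubspace ℝ E3)
    (hL : IsLine L) (hLΓ : L ≤ Γ) (hLn : L ≠ n)
    (hL' : IsImageLine Γ Ω p f L L')
    (v : E3) (hvL : v ∈ L) (hv : VanishingPt Γ Ω p v) :
    ∃ a : E3, ∃ s : ℝ, L.direction = Submodule.span ℝ {a} ∧ a ∈ Γ.direction ∧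
      p + a + s • (v - p) ∈ L' ∧ L'.direction = Submodule.span ℝ {v - p} := by
  obtain ⟨hvΓ, hvD⟩ := hv
  have hw0 : v - p ≠ 0 := by
    intro h
    rw [sub_eq_zero] at h
    exact hpΓ (h ▸ hvΓ)
  have hx : ∃ x ∈ L, x -ᵥ p ∉ Ω.direction := by
    by_contra hcon
    push Not at hcon
    have hle : L ≤ n := by
      intro x hx
      change x ∈ (n : Set E3)
      rw [hnvan]
      exact ⟨hLΓ hx, hcon x hx⟩
    apply hLn
    apply AffineSubspace.eq_of_direction_eq_of_nonempty_of_le _ hL.1 hle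
    apply Submodule.eq_of_le_of_finrank_eq (AffineSubspace.direction_le hle)
    rw [hL.2, hn.2]
  obtain ⟨x, hxL, hxD⟩ := hx
  obtain ⟨u, rfl⟩ : ∃ u, x = u + v := ⟨x - v, by simp⟩
  have huL : u ∈ L.direction := by
    have := AffineSubspace.vsub_mem_direction hxL hvL
    simpa using this
  simp only [vsub_eq_sub] at hvD hxD
  have huD : u ∉ Ω.direction := by
    intro h
    apply hxD
    have := Ω.direction.add_mem h hvD
    rwa [← add_sub_assoc] at this
  have hx2L : (2 : ℝ) • u + v ∈ L :=
    AffineSubspace.vadd_mem_of_mem_direction (L.direction.smul_mem 2 huL) hvL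
  have hx2D : (2 : ℝ) • u + v - p ∉ Ω.direction := by
    intro h
    apply huD
    have := Ω.direction.smul_mem (1 / 2 : ℝ) (Ω.direction.sub_mem h hvD)
    convert this using 1
    module
  obtain ⟨h1Ω, h1s⟩ := hf _ (hLΓ hxL) hxD
  obtain ⟨h2Ω, h2s⟩ := hf _ (hLΓ hx2L) hx2D
  have h1L := hL'.2.2 _ hxL hxD
  have h2L := hL'.2.2 _ hx2L hx2D
  rw [mem_affineSpan_pair_iff_exists_lineMap_eq] at h1s h2s
  obtain ⟨s, hs⟩ := h1s
  obtain ⟨t, ht⟩ := h2s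
  rw [← hs] at h1Ω h1L
  rw [← ht] at h2Ω h2L
  simp only [AffineMap.lineMap_apply, vsub_eq_sub, vadd_eq_add] at h1Ω h1L h2Ω h2L
  have hs0 : s ≠ 0 := by
    rintro rfl
    simp at h1Ω
    exact hpΩ h1Ω
  have hst : s = 2 * t := by
    by_contra hne
    have hne' : s - 2 * t ≠ 0 := sub_ne_zero.2 hne
    have h1 := AffineSubspace.vsub_mem_direction h1Ω h2Ω
    have h2 := Ω.direction.sub_mem h1 (Ω.direction.smul_mem (s - t) hvD)
    have h3 : (s - 2 * t) • u ∈ Ω.direction := by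
      convert h2 using 1
      simp only [vsub_eq_sub]
      module
    exact huD ((Submodule.smul_mem_iff _ hne').1 h3)
  have ht0 : t ≠ 0 := by
    rintro rfl
    simp at hst
    exact hs0 hst
  have hu0 : u ≠ 0 := by
    rintro rfl
    exact huD (Submodule.zero_mem _)
  refine ⟨s • u, s, ?_, ?_, ?_, ?_⟩
  · exact span_of_finrank_one _ hL.2 _ (L.direction.smul_mem s huL) (smul_ne_zero hs0 hu0)
  · exact Γ.direction.smul_mem s (AffineSubspace.direction_le hLΓ huL)
  · convert h1L using 1
    module
  · apply span_of_finrank_one _ hL'.1.2 _ _ hw0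
    have h1 := AffineSubspace.vsub_mem_direction h1L h2L
    rw [← Submodule.smul_mem_iff _ ht0]
    convert h1 using 1
    simp only [vsub_eq_sub, hst]
    module

/-- If two distinct lines `L, M ⊆ Γ` (neither equal to the vanishing line `n` of `Γ`) meet
at a vanishing point `v` of `Γ`, then their image lines `L'` and `M'` are disjoint, and
hence parallel. -/
theorem centralProj_images_of_lines_through_vanishing
    (Γ Ω : AffineSubspace ℝ E3) (p : E3) (f : E3 → E3)
    (hΓ : IsPlane Γ) (hΩ : IsPlane Ω)
    (hnp : Γ.direction ≠ Ω.direction)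
    (hpΓ : p ∉ Γ) (hpΩ : p ∉ Ω)
    (hf : IsCentralProj Γ Ω p f)
    (n : AffineSubspace ℝ E3) (hn : IsLine n)
    (hnvan : (n : Set E3) = {v : E3 | VanishingPt Γ Ω p v})
    (L M L' M' : AffineSubspace ℝ E3)
    (hL : IsLine L) (hM : IsLine M) (hLΓ : L ≤ Γ) (hMΓ : M ≤ Γ)
    (hLM : L ≠ M) (hLn : L ≠ n) (hMn : M ≠ n)
    (hL' : IsImageLine Γ Ω p f L L') (hM' : IsImageLine Γ Ω p f M M')
    (v : E3) (hvL : v ∈ L) (hvM : v ∈ M) (hv : VanishingPt Γ Ω p v) :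
    (L' : Set E3) ∩ (M' : Set E3) = ∅ ∧ L' ∥ M' := by
  obtain ⟨a, s, haL, haΓ, haL', hdL⟩ := image_line_aux Γ Ω p f hpΓ hpΩ hf n hn hnvan L L' hL hLΓ
    hLn hL' v hvL hv
  obtain ⟨b, t, hbM, hbΓ, hbM', hdM⟩ := image_line_aux Γ Ω p f hpΓ hpΩ hf n hn hnvan M M' hM hMΓ
    hMn hM' v hvM hv
  constructor
  · rw [Set.eq_empty_iff_forall_notMem]
    rintro z ⟨hzL, hzM⟩
    have h1 := AffineSubspace.vsub_mem_direction hzL haL'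
    have h2 := AffineSubspace.vsub_mem_direction hzM hbM'
    rw [hdL, Submodule.mem_span_singleton] at h1
    rw [hdM, Submodule.mem_span_singleton] at h2
    obtain ⟨k, hk⟩ := h1
    obtain ⟨l, hl⟩ := h2
    simp only [vsub_eq_sub] at hk hl
    have hab : a - b = (l + t - k - s) • (v - p) := by
      have e1 : a = z - p - s • (v - p) - k • (v - p) := by
        rw [hk]
        module
      have e2 : b = z - p - t • (v - p) - l • (v - p) := by
        rw [hl]
        module
      rw [e1, e2]
      module
    have hwΓ : v - p ∉ Γ.direction := by
      intro h
      apply hpΓ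
      have := AffineSubspace.vadd_mem_of_mem_direction (Γ.direction.neg_mem h) hv.1
      simpa using this
    have hc : l + t - k - s = 0 := by
      by_contra hne
      apply hwΓ
      rw [← Submodule.smul_mem_iff _ hne, ← hab]
      exact Γ.direction.sub_mem haΓ hbΓ
    rw [hc, zero_smul, sub_eq_zero] at hab
    apply hLM
    apply AffineSubspace.ext_of_direction_eq
    · rw [haL, hbM, hab]
    · exact ⟨v, hvL, hvM⟩
  · rw [AffineSubspace.parallel_iff_direction_eq_and_eq_bot_iff_eq_bot]
    refine ⟨hdL.trans hdM.symm, ?_⟩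
    constructor
    · rintro rfl
      exact absurd haL' (AffineSubspace.notMem_bot ℝ E3 _)
    · rintro rfl
      exact absurd hbM' (AffineSubspace.notMem_bot ℝ E3 _)
end
end

section
/- Let Γ and Ω be two non-parallel affine planes in ℝ³, let p be a point lying on neither plane, let f be the central projection from Γ to Ω through p, let n be the vanishing line of Γ and let m be the vanishing line of Ω. Let L and M be two distinct affine lines contained in Γ, both parallel to n and disjoint from n. Then the image lines L' and M' of L and M are both parallel to m; in particular L' and M' are parallel to each other. -/
noncomputable section

open scoped Affine

theorem dir_of_vanishing (Γ Ω n : AffineSubspace ℝ E3) (p : E3) (hn : IsLine n)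
    (h : (n : Set E3) = {v : E3 | VanishingPt Γ Ω p v}) :
    n.direction = Γ.direction ⊓ Ω.direction := by
  have hmem : ∀ v, v ∈ n ↔ VanishingPt Γ Ω p v := fun v => by
    rw [← SetLike.mem_coe, h]; rfl
  obtain ⟨v, hv⟩ := hn.1
  have hv' : v ∈ n := hv
  obtain ⟨h1, h2⟩ := (hmem v).1 hv'
  ext d
  rw [← AffineSubspace.vadd_mem_iff_mem_direction d hv', hmem, Submodule.mem_inf,
    ← AffineSubspace.vadd_mem_iff_mem_direction d h1]
  unfold VanishingPt
  rw [vadd_vsub_assoc, Submodule.add_mem_iff_left _ h2]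

theorem dir_of_image (Γ Ω n : AffineSubspace ℝ E3) (p : E3) (f : E3 → E3)
    (hpΩ : p ∉ Ω) (hf : IsCentralProj Γ Ω p f) (hn : IsLine n)
    (hnvan : (n : Set E3) = {v : E3 | VanishingPt Γ Ω p v})
    (L L' : AffineSubspace ℝ E3) (hL : IsLine L) (hLΓ : L ≤ Γ) (hLpar : L ∥ n)
    (hLdisj : (L : Set E3) ∩ (n : Set E3) = ∅) (hL' : IsImageLine Γ Ω p f L L') :
    L'.direction = n.direction := by
  have hD := dir_of_vanishing Γ Ω n p hn hnvan
  have hnv : ∀ x ∈ L, x -ᵥ p ∉ Ω.direction := by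
    intro x hx hxp
    have : x ∈ (n : Set E3) := by rw [hnvan]; exact ⟨hLΓ hx, hxp⟩
    have h2 : x ∈ (L : Set E3) ∩ (n : Set E3) := ⟨hx, this⟩
    rw [hLdisj] at h2
    exact h2
  symm
  apply Submodule.eq_of_le_of_finrank_eq
  · intro d hd
    obtain ⟨a, ha⟩ := hL.1
    have ha : a ∈ L := ha
    have hb : d +ᵥ a ∈ L := AffineSubspace.vadd_mem_of_mem_direction
      (by rw [hLpar.direction_eq]; exact hd) ha
    have hdΩ : d ∈ Ω.direction := by
      rw [hD] at hd; exact hd.2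
    have hna := hnv a ha
    obtain ⟨fa1, fa2⟩ := hf a (hLΓ ha) hna
    obtain ⟨fb1, fb2⟩ := hf _ (hLΓ hb) (hnv _ hb)
    have la := hL'.2.2 a ha hna
    have lb := hL'.2.2 _ hb (hnv _ hb)
    obtain ⟨s, hs⟩ := (open AffineSubspace in mem_affineSpan_pair_iff_exists_lineMap_eq).1 fa2
    obtain ⟨t, ht⟩ := (open AffineSubspace in mem_affineSpan_pair_iff_exists_lineMap_eq).1 fb2
    rw [AffineMap.lineMap_apply] at hs ht
    have key : f (d +ᵥ a) -ᵥ f a = (t - s) • (a -ᵥ p) + t • d := by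
      rw [← hs, ← ht]
      simp only [vsub_eq_sub, vadd_eq_add]
      module
    have h1 : f (d +ᵥ a) -ᵥ f a ∈ Ω.direction := AffineSubspace.vsub_mem_direction fb1 fa1
    rw [key, Submodule.add_mem_iff_left _ (Submodule.smul_mem _ _ hdΩ)] at h1
    have hts : t - s = 0 := by
      by_contra hne
      exact hna ((Submodule.smul_mem_iff _ hne).1 h1)
    have ht0 : t ≠ 0 := by
      rintro rfl
      apply hpΩ
      rw [← ht] at fb1
      simpa using fb1
    have h3 : f (d +ᵥ a) -ᵥ f a ∈ L'.direction := AffineSubspace.vsub_mem_direction lb la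
    rw [key, hts, zero_smul, zero_add] at h3
    exact (Submodule.smul_mem_iff _ ht0).1 h3
  · rw [hn.2, hL'.1.2]

theorem parallel_of_dir {A B : AffineSubspace ℝ E3} (hA : IsLine A) (hB : IsLine B)
    (h : A.direction = B.direction) : A ∥ B := by
  rw [AffineSubspace.parallel_iff_direction_eq_and_eq_bot_iff_eq_bot]
  have h1 := (AffineSubspace.nonempty_iff_ne_bot A).1 hA.1
  have h2 := (AffineSubspace.nonempty_iff_ne_bot B).1 hB.1
  exact ⟨h, by simp [h1, h2]⟩

/-- If two distinct lines `L, M ⊆ Γ` are parallel to and disjoint from the vanishing line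
`n` of `Γ`, then their image lines `L'` and `M'` are both parallel to the vanishing line
`m` of `Ω`; in particular `L'` and `M'` are parallel to each other. -/
theorem centralProj_images_of_lines_parallel_to_vanishing
    (Γ Ω : AffineSubspace ℝ E3) (p : E3) (f : E3 → E3)
    (hΓ : IsPlane Γ) (hΩ : IsPlane Ω)
    (hnp : Γ.direction ≠ Ω.direction)
    (hpΓ : p ∉ Γ) (hpΩ : p ∉ Ω)
    (hf : IsCentralProj Γ Ω p f)
    (n : AffineSubspace ℝ E3) (hn : IsLine n)
    (hnvan : (n : Set E3) = {v : E3 | VanishingPt Γ Ω p v})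
    (m : AffineSubspace ℝ E3) (hm : IsLine m)
    (hmvan : (m : Set E3) = {u : E3 | VanishingPt Ω Γ p u})
    (L M L' M' : AffineSubspace ℝ E3)
    (hL : IsLine L) (hM : IsLine M) (hLΓ : L ≤ Γ) (hMΓ : M ≤ Γ)
    (hLM : L ≠ M)
    (hLpar : L ∥ n) (hMpar : M ∥ n)
    (hLdisj : (L : Set E3) ∩ (n : Set E3) = ∅)
    (hMdisj : (M : Set E3) ∩ (n : Set E3) = ∅)
    (hL' : IsImageLine Γ Ω p f L L') (hM' : IsImageLine Γ Ω p f M M') :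
    L' ∥ m ∧ M' ∥ m ∧ L' ∥ M' := by
  have h1 := dir_of_image Γ Ω n p f hpΩ hf hn hnvan L L' hL hLΓ hLpar hLdisj hL'
  have h2 := dir_of_image Γ Ω n p f hpΩ hf hn hnvan M M' hM hMΓ hMpar hMdisj hM'
  have h3 : n.direction = m.direction := by
    rw [dir_of_vanishing Γ Ω n p hn hnvan, dir_of_vanishing Ω Γ m p hm hmvan, inf_comm]
  exact ⟨parallel_of_dir hL'.1 hm (h1.trans h3), parallel_of_dir hM'.1 hm (h2.trans h3),
    parallel_of_dir hL'.1 hM'.1 (h1.trans h2.symm)⟩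
end
end

section
/- Let Γ and Ω be two non-parallel affine planes in ℝ³, let p be a point lying on neither plane, and let f be the central projection from Γ to Ω through p. If a and b are points of Γ such that the closed segment from a to b contains no vanishing point of Γ, then the image under f of the closed segment from a to b is exactly the closed segment from f(a) to f(b). -/
noncomputable section

/-- If `f` is the central projection from `Γ` to `Ω` through `p` and the closed segment
between the points `a, b ∈ Γ` contains no vanishing point of `Γ`, then the image under
`f` of the closed segment from `a` to `b` is exactly the closed segment from `f a` to
`f b`. -/
theorem centralProj_image_segment
    (Γ Ω : AffineSubspace ℝ E3) (p : E3) (f : E3 → E3)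
    (hΓ : IsPlane Γ) (hΩ : IsPlane Ω)
    (hnp : Γ.direction ≠ Ω.direction)
    (hpΓ : p ∉ Γ) (hpΩ : p ∉ Ω)
    (hf : IsCentralProj Γ Ω p f)
    (a b : E3) (ha : a ∈ Γ) (hb : b ∈ Γ)
    (hnv : ∀ x ∈ segment ℝ a b, ¬ VanishingPt Γ Ω p x) :
    f '' segment ℝ a b = segment ℝ (f a) (f b) := by
  have hnv' : ∀ x ∈ segment ℝ a b, x ∈ Γ ∧ x - p ∉ Ω.direction := by
    intro x hx
    have hxΓ : x ∈ Γ := by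
      have h1 : segment ℝ a b ⊆ (Γ : Set E3) := Γ.convex.segment_subset ha hb
      exact h1 hx
    exact ⟨hxΓ, fun h => hnv x hx ⟨hxΓ, h⟩⟩
  obtain ⟨L, hL, hLa⟩ : ∃ L : E3 →ₗ[ℝ] ℝ, Ω.direction = LinearMap.ker L ∧ L (a - p) = 1 := by
    have hlt : Ω.direction < ⊤ := by
      rw [lt_top_iff_ne_top]
      intro h
      have := hΩ.2
      rw [h, finrank_top] at this
      simp at this
    obtain ⟨M, hM0, hM⟩ := Submodule.exists_le_ker_of_lt_top _ hlt
    have hMk : Ω.direction = LinearMap.ker M := by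
      apply Submodule.eq_of_le_of_finrank_eq hM
      have h1 := Module.Dual.finrank_ker_add_one_of_ne_zero hM0
      have h2 := hΩ.2
      simp only [Module.finrank_fin_fun] at h1
      omega
    have hMa : M (a - p) ≠ 0 := by
      intro h
      apply (hnv' a (left_mem_segment ℝ a b)).2
      rw [hMk]
      exact h
    refine ⟨(M (a - p))⁻¹ • M, ?_, ?_⟩
    · rw [hMk, LinearMap.ker_smul _ _ (inv_ne_zero hMa)]
    · rw [LinearMap.smul_apply, smul_eq_mul, inv_mul_cancel₀ hMa]
  obtain ⟨w, hw⟩ := hΩ.1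
  have hw' : w ∈ Ω := hw
  set c := L (w - p) with hc
  have key : ∀ x ∈ segment ℝ a b, L (x - p) ≠ 0 ∧ f x = p + (c / L (x - p)) • (x - p) := by
    intro x hx
    obtain ⟨hxΓ, hxd⟩ := hnv' x hx
    have h0 : L (x - p) ≠ 0 := by
      intro h
      apply hxd
      rw [hL]
      exact h
    refine ⟨h0, ?_⟩
    obtain ⟨h1, h2⟩ := hf x hxΓ hxd
    obtain ⟨t, ht⟩ := mem_affineSpan_pair_iff_exists_lineMap_eq.1 h2
    have ht' : f x = p + t • (x - p) := by
      rw [← ht, AffineMap.lineMap_apply]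
      simp [add_comm]
    have h3 : f x - w ∈ Ω.direction := AffineSubspace.vsub_mem_direction h1 hw'
    rw [hL, LinearMap.mem_ker] at h3
    have h4 : f x - w = t • (x - p) - (w - p) := by
      rw [ht']; abel
    rw [h4, map_sub, map_smul, smul_eq_mul, ← hc] at h3
    rw [ht', eq_div_of_mul_eq h0 (sub_eq_zero.1 h3)]
  obtain ⟨-, hfa⟩ := key a (left_mem_segment ℝ a b)
  obtain ⟨hB0, hfb⟩ := key b (right_mem_segment ℝ a b)
  rw [hLa] at hfa
  have hcomb : ∀ s t : ℝ, s + t = 1 → L (s • a + t • b - p) = s + t * L (b - p) := by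
    intro s t h
    have h1 : s • a + t • b - p = s • (a - p) + t • (b - p) := by
      have h2 : p = (s + t) • p := by rw [h, one_smul]
      conv_lhs => rw [h2]
      module
    rw [h1, map_add, map_smul, map_smul, hLa]
    simp
  generalize L (b - p) = B at *
  have hB : 0 < B := by
    by_contra hneg
    have hneg' : B < 0 := lt_of_le_of_ne (not_lt.1 hneg) hB0
    have hd : 0 < 1 - B := by linarith
    have hsum : -B / (1 - B) + 1 / (1 - B) = 1 := by field_simp; ring
    have hm : (-B / (1 - B)) • a + (1 / (1 - B)) • b ∈ segment ℝ a b :=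
      ⟨_, _, div_nonneg (by linarith) hd.le, by positivity, hsum, rfl⟩
    apply (key _ hm).1
    rw [hcomb _ _ hsum]
    field_simp
    ring
  have main : ∀ s t : ℝ, 0 ≤ s → 0 ≤ t → s + t = 1 → 0 < s + t * B →
      f (s • a + t • b) = (s / (s + t * B)) • f a + (t * B / (s + t * B)) • f b := by
    intro s t hs ht hst hpos
    obtain ⟨-, h⟩ := key _ ⟨s, t, hs, ht, hst, rfl⟩
    rw [h, hcomb s t hst, hfa, hfb]
    ext i
    simp only [Pi.add_apply, Pi.smul_apply, Pi.sub_apply, smul_eq_mul]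
    have ht1 : s = 1 - t := by linarith
    subst ht1
    have := hpos.ne'
    field_simp
    ring
  have hpos : ∀ s t : ℝ, 0 ≤ s → 0 ≤ t → s + t = 1 → 0 < s + t * B := by
    intro s t hs ht hst
    rcases hs.eq_or_lt with h | h
    · have : t = 1 := by linarith
      subst this
      linarith
    · have := mul_nonneg ht hB.le
      linarith
  apply Set.Subset.antisymm
  · rintro _ ⟨_, ⟨s, t, hs, ht, hst, rfl⟩, rfl⟩
    have hp := hpos s t hs ht hst
    refine ⟨_, _, ?_, ?_, ?_, (main s t hs ht hst hp).symm⟩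
    · positivity
    · positivity
    · rw [← add_div, div_self hp.ne']
  · rintro _ ⟨u, v, hu, hv, huv, rfl⟩
    have hd : 0 < v + u * B := hpos v u hv hu (by linarith)
    have hs : 0 ≤ u * B / (v + u * B) := by positivity
    have ht : 0 ≤ v / (v + u * B) := by positivity
    have hst : u * B / (v + u * B) + v / (v + u * B) = 1 := by
      rw [← add_div, add_comm, div_self hd.ne']
    refine ⟨_, ⟨_, _, hs, ht, hst, rfl⟩, ?_⟩
    have hp := hpos _ _ hs ht hst
    rw [main _ _ hs ht hst hp]
    have he : u * B / (v + u * B) + v / (v + u * B) * B = B / (v + u * B) := by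
      rw [div_mul_eq_mul_div, ← add_div, ← add_mul, huv, one_mul]
    rw [he]
    have e1 : u * B / (v + u * B) / (B / (v + u * B)) = u := by
      field_simp
    have e2 : v / (v + u * B) * B / (B / (v + u * B)) = v := by
      field_simp
    rw [e1, e2]
end
end

section
/- Work in ℝ³ with Γ = {(x,y,z) : x = 0} and Ω = {(x,y,z) : z = 0}, fix p = (p₁,p₂,p₃) with p₁ > 0 and p₃ > 0, let f be the central projection from Γ to Ω through p, and let v₀ = (0,p₂,p₃). Let F = (v₀,v₁,…,v_{n−1}) be a convex fan in general position contained in Γ whose kernel convex vertex is v₀ and all of whose other vertices have z-coordinate strictly less than p₃. Then T = (f(v₁),f(v₂),…,f(v_{n−1})) is a terrain in Ω: it is a simple polygonal chain (its edges intersect only at shared endpoints) and it is monotone, its vertices having strictly monotone y-coordinates. -/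
noncomputable section

/-- `f` is the central projection through `p` from the plane `Γ = {x = 0}` to the plane
`Ω = {z = 0}`: every point `a` of `Γ` whose `z`-coordinate differs from that of `p`
(i.e. every non-vanishing point of `Γ`) is sent to the (unique) intersection point of the
line through `p` and `a` with `Ω`. -/
def IsCentralProjC (p : E3) (f : E3 → E3) : Prop :=
  ∀ a : E3, a 0 = 0 → a 2 ≠ p 2 →
    (f a) 2 = 0 ∧ ∃ t : ℝ, f a = p + t • (a - p)

/-- The boundary of the polygon with vertices `w 0, …, w (n-1)` (cyclically): the union
of its edges. -/
def polyBoundary (w : ℕ → E3) (n : ℕ) : Set E3 :=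
  ⋃ i ∈ Finset.range n, segment ℝ (w i) (w ((i + 1) % n))

/-- The closure of the polygon with vertices `w 0, …, w (n-1)` drawn in the plane `P`:
its boundary together with all bounded connected components of the complement (in `P`)
of the boundary, i.e. the bounded region enclosed by the boundary plus the boundary. -/
def polyRegion (P : Set E3) (w : ℕ → E3) (n : ℕ) : Set E3 :=
  polyBoundary w n ∪
    {x ∈ P | x ∉ polyBoundary w n ∧
      Bornology.IsBounded (connectedComponentIn (P \ polyBoundary w n) x)}

/-- `w 0, …, w (n-1)` are the vertices of a simple polygon: they are pairwise distinct
and two distinct (cyclically consecutive) edges intersect exactly at their shared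
endpoints. -/
def IsSimplePolygon (w : ℕ → E3) (n : ℕ) : Prop :=
  3 ≤ n ∧ (∀ i < n, ∀ j < n, w i = w j → i = j) ∧
    ∀ i < n, ∀ j < n, i ≠ j →
      segment ℝ (w i) (w ((i + 1) % n)) ∩ segment ℝ (w j) (w ((j + 1) % n)) =
        ({w i, w ((i + 1) % n)} : Set E3) ∩ ({w j, w ((j + 1) % n)} : Set E3)

/-- The polygon is in general position: no three of its vertices are collinear. -/
def GeneralPosition (w : ℕ → E3) (n : ℕ) : Prop :=
  ∀ i < n, ∀ j < n, ∀ k < n, i ≠ j → j ≠ k → i ≠ k →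
    ¬ Collinear ℝ ({w i, w j, w k} : Set E3)

/-- Vertex `w i` is a convex vertex (interior angle less than `π`): the closure of the
polygon is locally convex at `w i`. -/
def ConvexVertexAt (P : Set E3) (w : ℕ → E3) (n : ℕ) (i : ℕ) : Prop :=
  ∃ U ∈ nhds (w i), Convex ℝ (polyRegion P w n ∩ U)

/-- Vertex `w i` is a kernel vertex: it sees every point of the closure of the polygon,
i.e. for every point `x` of the closure, the segment from `w i` to `x` stays inside the
closure. -/
def IsKernelVertexAt (P : Set E3) (w : ℕ → E3) (n : ℕ) (i : ℕ) : Prop :=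
  ∀ x ∈ polyRegion P w n, segment ℝ (w i) x ⊆ polyRegion P w n

/-- A convex fan with convex kernel vertex `w i`: a simple polygon in the plane `P` whose
vertex `w i` is convex and sees every point of the closure. -/
def IsConvexFanAt (P : Set E3) (w : ℕ → E3) (n : ℕ) (i : ℕ) : Prop :=
  IsSimplePolygon w n ∧ ConvexVertexAt P w n i ∧ IsKernelVertexAt P w n i

/-- `u 0, …, u (m-1)` are the vertices of a simple polygonal chain: they are pairwise
distinct and two distinct (consecutive) edges intersect exactly at their shared
endpoints. -/
def IsSimpleChain (u : ℕ → E3) (m : ℕ) : Prop :=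
  (∀ i < m, ∀ j < m, u i = u j → i = j) ∧
    ∀ i, i + 1 < m → ∀ j, j + 1 < m → i ≠ j →
      segment ℝ (u i) (u (i + 1)) ∩ segment ℝ (u j) (u (j + 1)) =
        ({u i, u (i + 1)} : Set E3) ∩ ({u j, u (j + 1)} : Set E3)


section tcf
open Filter Topology Set

/-- Abstract topological core. -/
theorem tcf_core (a b : ℝ) (hab : a < b) (S L : ℝ → ℝ)
    (hS : ContinuousOn S (Icc a b)) (hL : ContinuousOn L (Icc a b))
    (hpos : ∀ t ∈ Icc a b, 0 < L t)
    (hinj : ∀ t ∈ Icc a b, ∀ t' ∈ Icc a b, S t = S t' → L t = L t' → t = t')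
    (hfin : ∀ s, {t ∈ Icc a b | S t = s}.Finite)
    (hK : ∀ t ∈ Icc a b, ∀ d, 0 < d → d < L t → (∀ τ ∈ Icc a b, S τ = S t → L τ ≠ d) →
      S t ≠ S a → S t ≠ S b →
      ¬ ∃ᶠ s' in 𝓝 (S t), ∀ τ ∈ Icc a b, S τ = s' → L τ < d)
    (hne : S a ≠ S b)
    (hext : ∀ c ∈ ({a, b} : Set ℝ),
      ((∀ τ ∈ Icc a b, S τ ≤ S c) ∨ (∀ τ ∈ Icc a b, S c ≤ S τ)) →
      ∀ t ∈ Icc a b, S t = S c → t = c) :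
    StrictMonoOn S (Icc a b) ∨ StrictAntiOn S (Icc a b) := by
  have haI : a ∈ Icc a b := ⟨le_refl _, hab.le⟩
  have hbI : b ∈ Icc a b := ⟨hab.le, le_refl _⟩
  have hpick : ∀ s x y : ℝ, x < y →
      ∃ d, x < d ∧ d < y ∧ ∀ τ ∈ Icc a b, S τ = s → L τ ≠ d := by
    intro s x y hxy
    have h1 : (L '' {t ∈ Icc a b | S t = s}).Finite := (hfin s).image _
    obtain ⟨d, hd, hd'⟩ := ((Ioo_infinite hxy).sdiff h1).nonempty
    refine ⟨d, hd.1, hd.2, ?_⟩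
    intro τ hτ hs hd2
    exact hd' ⟨τ, ⟨hτ, hs⟩, hd2⟩
  have hend : ∀ t ∈ Icc a b, (∃ᶠ s' in 𝓝 (S t), ∀ τ ∈ Icc a b, S τ ≠ s') →
      S t = S a ∨ S t = S b := by
    intro t ht hfr
    by_contra hcon
    push Not at hcon
    obtain ⟨d, hd0, hd1, hd2⟩ := hpick (S t) 0 (L t) (hpos t ht)
    refine hK t ht d hd0 hd1 hd2 hcon.1 hcon.2 (hfr.mono ?_)
    intro s' hs' τ hτ h
    exact absurd h (hs' τ hτ)
  obtain ⟨tM, htM, hM⟩ := isCompact_Icc.exists_isMaxOn ⟨a, haI⟩ hS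
  obtain ⟨tm, htm, hm⟩ := isCompact_Icc.exists_isMinOn ⟨a, haI⟩ hS
  have hMe := hend tM htM (by
    have : ∃ᶠ s' in 𝓝 (S tM), S tM < s' := by
      have : ∃ᶠ s' in 𝓝[>] (S tM), S tM < s' := by
        have h : ∀ᶠ s' in 𝓝[>] (S tM), s' ∈ Ioi (S tM) := eventually_mem_nhdsWithin
        exact h.frequently
      exact this.filter_mono nhdsWithin_le_nhds
    refine this.mono ?_
    intro s' hs' τ hτ h
    have h2 : S τ ≤ S tM := hM hτ
    linarith)
  have hme := hend tm htm (by
    have : ∃ᶠ s' in 𝓝 (S tm), s' < S tm := by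
      have : ∃ᶠ s' in 𝓝[<] (S tm), s' < S tm := by
        have h : ∀ᶠ s' in 𝓝[<] (S tm), s' ∈ Iio (S tm) := eventually_mem_nhdsWithin
        exact h.frequently
      exact this.filter_mono nhdsWithin_le_nhds
    refine this.mono ?_
    intro s' hs' τ hτ h
    have h2 : S tm ≤ S τ := hm hτ
    linarith)
  have hM' : ∀ τ ∈ Icc a b, S τ ≤ S tM := fun τ hτ => hM hτ
  have hm' : ∀ τ ∈ Icc a b, S tm ≤ S τ := fun τ hτ => hm hτ
  have hMm : S tM ≠ S tm := by
    intro h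
    apply hne
    have := hM' a haI
    have := hM' b hbI
    have := hm' a haI
    have := hm' b hbI
    linarith
  have hua : ∀ t ∈ Icc a b, S t = S a → t = a := by
    apply hext a (by simp)
    rcases hMe with h | h
    · left; rwa [h] at hM'
    · right
      rcases hme with h' | h'
      · rwa [h'] at hm'
      · exact absurd (h.trans h'.symm) hMm
  have hub : ∀ t ∈ Icc a b, S t = S b → t = b := by
    apply hext b (by simp)
    rcases hMe with h | h
    · right
      rcases hme with h' | h'
      · exact absurd (h.trans h'.symm) hMm
      · rwa [h'] at hm'
    · left; rwa [h] at hM'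
  set A : Set ℝ := {t ∈ Icc a b | ∀ τ ∈ Icc a b, S τ = S t → L τ ≤ L t} with hA
  have hAI : A ⊆ Icc a b := fun t ht => ht.1
  have hAcl : IsClosed A := by
    rw [← closure_subset_iff_isClosed]
    intro t ht
    have htI : t ∈ Icc a b := closure_minimal hAI isClosed_Icc ht
    refine ⟨htI, ?_⟩
    intro t' ht' hst
    by_contra hlt
    push Not at hlt
    obtain ⟨d, hd0, hd1, hd2⟩ := hpick (S t') _ _ hlt
    have hna : S t' ≠ S a := by
      intro h
      have h1 := hua t' ht' h
      have h2 := hua t htI (hst.symm.trans h)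
      rw [h1, h2] at hlt
      exact lt_irrefl _ hlt
    have hnb : S t' ≠ S b := by
      intro h
      have h1 := hub t' ht' h
      have h2 := hub t htI (hst.symm.trans h)
      rw [h1, h2] at hlt
      exact lt_irrefl _ hlt
    refine hK t' ht' d ((hpos t htI).trans hd0) hd1 hd2 hna hnb ?_
    have : (𝓝[A] t).NeBot := mem_closure_iff_nhdsWithin_neBot.1 ht
    have hSc : Tendsto S (𝓝[A] t) (𝓝 (S t')) := by
      rw [hst]; exact (hS t htI).mono_left (nhdsWithin_mono _ hAI)
    have hLc : Tendsto L (𝓝[A] t) (𝓝 (L t)) := (hL t htI).mono_left (nhdsWithin_mono _ hAI)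
    refine hSc.frequently (Eventually.frequently ?_)
    filter_upwards [hLc.eventually (gt_mem_nhds hd0), self_mem_nhdsWithin] with τ h1 h2
    intro τ' hτ' h3
    exact lt_of_le_of_lt (h2.2 τ' hτ' h3) h1
  have hAcomp : IsCompact A := isCompact_Icc.of_isClosed_subset hAcl hAI
  have hSA : InjOn S A := by
    intro t ht t' ht' h
    exact hinj t ht.1 t' ht'.1 h (le_antisymm (ht'.2 t ht.1 h) (ht.2 t' ht'.1 h.symm))
  have himg : S '' A = S '' Icc a b := by
    apply Subset.antisymm (image_mono hAI)
    rintro _ ⟨t, ht, rfl⟩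
    obtain ⟨τ, hτ, hmax⟩ := Set.exists_max_image _ L (hfin (S t)) ⟨t, ht, rfl⟩
    refine ⟨τ, ⟨hτ.1, ?_⟩, hτ.2⟩
    intro τ' hτ' h
    exact hmax τ' ⟨hτ', h.trans hτ.2⟩
  have hconn : IsPreconnected A := by
    have : CompactSpace A := isCompact_iff_compactSpace.1 hAcomp
    have hc : Continuous (A.domRestrict S) := (hS.mono hAI).domRestrict
    have hi : Function.Injective (A.domRestrict S) := injOn_iff_injective.1 hSA
    have he := hc.isClosedEmbedding hi
    have : IsPreconnected ((A.domRestrict S) '' univ) := by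
      rw [image_univ, range_domRestrict, himg]
      exact isPreconnected_Icc.image _ hS
    have h2 : IsPreconnected (univ : Set A) := he.isInducing.isPreconnected_image.1 this
    have h3 := h2.image ((↑) : A → ℝ) continuous_subtype_val.continuousOn
    simpa using h3
  have haA : a ∈ A := ⟨haI, fun τ hτ h => by rw [hua τ hτ h]⟩
  have hbA : b ∈ A := ⟨hbI, fun τ hτ h => by rw [hub τ hτ h]⟩
  have hIA : Icc a b ⊆ A := hconn.ordConnected.out haA hbA
  exact hS.strictMonoOn_of_injOn_Icc' hab.le (hSA.mono hIA)

/-- Piecewise linear path. -/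
def tcfPath (u : ℕ → E3) (M : ℕ) (t : ℝ) : E3 :=
  u 0 + ∑ i ∈ Finset.range M, (max 0 (min 1 (t - i))) • (u (i + 1) - u i)

theorem tcfPath_cont (u : ℕ → E3) (M : ℕ) : Continuous (tcfPath u M) := by
  unfold tcfPath
  fun_prop

theorem tcfPath_end (u : ℕ → E3) (M : ℕ) (t : ℝ) (h : (M : ℝ) ≤ t) : tcfPath u M t = u M := by
  induction M with
  | zero => simp [tcfPath]
  | succ k ih =>
    push_cast at h
    have := ih (by linarith)
    unfold tcfPath at this ⊢
    rw [Finset.sum_range_succ, ← add_assoc, this, min_eq_left (by linarith), max_eq_right (by norm_num)]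
    simp

theorem tcfPath_eq (u : ℕ → E3) (M k : ℕ) (t : ℝ) (hk : k + 1 ≤ M) (h1 : (k : ℝ) ≤ t)
    (h2 : t ≤ k + 1) : tcfPath u M t = u k + (t - k) • (u (k + 1) - u k) := by
  induction M, hk using Nat.le_induction with
  | base =>
    have := tcfPath_end u k t h1
    unfold tcfPath at this ⊢
    rw [Finset.sum_range_succ, ← add_assoc, this, min_eq_right (by linarith), max_eq_right (by linarith)]
  | succ M hM ih =>
    have hM' : ((k : ℝ) + 1) ≤ M := by exact_mod_cast hM
    unfold tcfPath at ih ⊢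
    rw [Finset.sum_range_succ, ← add_assoc, ih, min_eq_right (by linarith), max_eq_left (by linarith)]
    simp

theorem tcf_locate (M : ℕ) (hM : 1 ≤ M) (t : ℝ) (h0 : 0 ≤ t) (h1 : t ≤ M) :
    ∃ k : ℕ, k + 1 ≤ M ∧ (k : ℝ) ≤ t ∧ t ≤ k + 1 := by
  induction M, hM using Nat.le_induction with
  | base => exact ⟨0, le_refl _, by simpa using h0, by simpa using h1⟩
  | succ M hM ih =>
    by_cases h : t ≤ M
    · obtain ⟨k, hk, hk'⟩ := ih h
      exact ⟨k, by omega, hk'⟩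
    · push Not at h
      exact ⟨M, le_refl _, h.le, by push_cast at h1; exact h1⟩

/-- A monotone chain is simple. -/
theorem tcf_chain (u : ℕ → E3) (m : ℕ) (ε : ℝ)
    (h : ∀ i j, i < j → j < m → ε * u i 1 < ε * u j 1) : IsSimpleChain u m := by
  have hle : ∀ i j, i ≤ j → j < m → ε * u i 1 ≤ ε * u j 1 := by
    intro i j hij hj
    rcases hij.eq_or_lt with rfl | hlt
    · exact le_refl _
    · exact (h i j hlt hj).le
  have hinj : ∀ i < m, ∀ j < m, u i = u j → i = j := by
    intro i hi j hj hij
    rcases lt_trichotomy i j with hl | hl | hl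
    · have := h i j hl hj
      rw [hij] at this
      exact absurd this (lt_irrefl _)
    · exact hl
    · have := h j i hl hi
      rw [hij] at this
      exact absurd this (lt_irrefl _)
  refine ⟨hinj, ?_⟩
  have key : ∀ i j, i < j → j + 1 < m → ∀ x, x ∈ segment ℝ (u i) (u (i + 1)) →
      x ∈ segment ℝ (u j) (u (j + 1)) → x = u (i + 1) ∧ x = u j := by
    intro i j hij hj x hx1 hx2
    rw [segment_eq_image'] at hx1 hx2
    obtain ⟨θ, hθ, rfl⟩ := hx1
    obtain ⟨η, hη, he⟩ := hx2
    have h1 := h i (i + 1) (by omega) (by omega)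
    have h2 := h j (j + 1) (by omega) (by omega)
    have h3 := hle (i + 1) j (by omega) (by omega)
    have hc := congrFun he 1
    simp only [Pi.add_apply, Pi.smul_apply, Pi.sub_apply, smul_eq_mul] at hc
    have hc' : ε * u j 1 + η * (ε * u (j + 1) 1 - ε * u j 1)
        = ε * u i 1 + θ * (ε * u (i + 1) 1 - ε * u i 1) := by
      linear_combination ε * hc
    have e1 : 0 ≤ η * (ε * u (j + 1) 1 - ε * u j 1) := mul_nonneg hη.1 (by linarith)
    have e2 : 0 ≤ (1 - θ) * (ε * u (i + 1) 1 - ε * u i 1) :=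
      mul_nonneg (by linarith [hθ.2]) (by linarith)
    have hη0 : η = 0 := by
      have : η * (ε * u (j + 1) 1 - ε * u j 1) = 0 := by linarith
      rcases mul_eq_zero.1 this with h | h
      · exact h
      · linarith
    have hθ1 : θ = 1 := by
      have : (1 - θ) * (ε * u (i + 1) 1 - ε * u i 1) = 0 := by linarith
      rcases mul_eq_zero.1 this with h | h
      · linarith
      · linarith
    constructor
    · simp [hθ1]
    · rw [← he]; simp [hη0]
  intro i hi j hj hij
  apply Subset.antisymm
  · rintro x ⟨hx1, hx2⟩
    rcases lt_or_gt_of_ne hij with hl | hl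
    · obtain ⟨h1, h2⟩ := key i j hl hj x hx1 hx2
      exact ⟨Or.inr h1, Or.inl h2⟩
    · obtain ⟨h1, h2⟩ := key j i hl hi x hx2 hx1
      exact ⟨Or.inl h2, Or.inr h1⟩
  · apply inter_subset_inter
    · rintro x (rfl | rfl)
      · exact left_mem_segment ℝ _ _
      · exact right_mem_segment ℝ _ _
    · rintro x (rfl | rfl)
      · exact left_mem_segment ℝ _ _
      · exact right_mem_segment ℝ _ _

/-- Polar coordinates at the vanishing point. -/
def tcfPt (p : E3) (s d : ℝ) : E3 := ![0, p 1 + s * d, p 2 - d]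

theorem tcfPt_cont1 (p : E3) (d : ℝ) : Continuous (fun s => tcfPt p s d) := by
  refine continuous_pi fun i => ?_
  fin_cases i <;> simp [tcfPt] <;> fun_prop

theorem tcfPt_cont2 (p : E3) (s : ℝ) : Continuous (fun d => tcfPt p s d) := by
  refine continuous_pi fun i => ?_
  fin_cases i <;> simp [tcfPt] <;> fun_prop

theorem tcf_bd_closed (w : ℕ → E3) (n : ℕ) : IsClosed (polyBoundary w n) := by
  unfold polyBoundary
  apply Set.Finite.isClosed_biUnion (Finset.finite_toSet _)
  intro i _
  rw [segment_eq_image']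
  exact (isCompact_Icc.image (by fun_prop)).isClosed

theorem tcf_ext (p : E3) (w : ℕ → E3) (n : ℕ) (s d : ℝ)
    (h : ∀ d', d ≤ d' → tcfPt p s d' ∉ polyBoundary w n) :
    ¬ Bornology.IsBounded
      (connectedComponentIn ({v : E3 | v 0 = 0} \ polyBoundary w n) (tcfPt p s d)) := by
  intro hb
  have hpre : IsPreconnected ((fun d => tcfPt p s d) '' Ici d) :=
    isPreconnected_Ici.image _ (tcfPt_cont2 p s).continuousOn
  have hsub : ((fun d => tcfPt p s d) '' Ici d) ⊆
      connectedComponentIn ({v : E3 | v 0 = 0} \ polyBoundary w n) (tcfPt p s d) := by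
    apply hpre.subset_connectedComponentIn
    · exact ⟨d, self_mem_Ici, rfl⟩
    · rintro _ ⟨d', hd', rfl⟩
      exact ⟨by simp [tcfPt], h d' hd'⟩
  obtain ⟨R, hR⟩ := (hb.subset hsub).exists_norm_le
  have h1 := hR _ ⟨max d (|p 2| + |R| + 1), mem_Ici.2 (le_max_left _ _), rfl⟩
  have h2 := (norm_le_pi_norm (tcfPt p s (max d (|p 2| + |R| + 1))) 2).trans h1
  have h3 := le_max_right d (|p 2| + |R| + 1)
  simp only [tcfPt, Real.norm_eq_abs, Matrix.cons_val] at h2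
  have h4 := neg_le_abs (p 2 - max d (|p 2| + |R| + 1))
  have h5 := le_abs_self (p 2)
  have h6 := le_abs_self R
  linarith

theorem tcf_ext2 (p : E3) (w : ℕ → E3) (n : ℕ) (s d : ℝ)
    (hx : tcfPt p s d ∉ polyBoundary w n)
    (h : ∃ᶠ s' in 𝓝 s, ∀ d', d ≤ d' → tcfPt p s' d' ∉ polyBoundary w n) :
    tcfPt p s d ∉ polyRegion {v : E3 | v 0 = 0} w n := by
  rintro (hB | ⟨hP, -, hbd⟩)
  · exact hx hB
  obtain ⟨r, hr, hball⟩ := Metric.isOpen_iff.1 (tcf_bd_closed w n).isOpen_compl _ hx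
  have hev : ∀ᶠ s' in 𝓝 s, tcfPt p s' d ∈ Metric.ball (tcfPt p s d) r :=
    (tcfPt_cont1 p d).continuousAt (Metric.ball_mem_nhds _ hr)
  obtain ⟨s', hs', hs''⟩ := (h.and_eventually hev).exists
  have hconv : Convex ℝ (Metric.ball (tcfPt p s d) r ∩ {v : E3 | v 0 = 0}) := by
    apply (convex_ball _ _).inter
    intro a ha b hb x y _ _ _
    have ha' : a 0 = 0 := ha
    have hb' : b 0 = 0 := hb
    show (x • a + y • b) 0 = 0
    simp [ha', hb']
  have hsub := hconv.isPreconnected.subset_connectedComponentIn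
    (F := {v : E3 | v 0 = 0} \ polyBoundary w n) (x := tcfPt p s d)
    ⟨Metric.mem_ball_self hr, hP⟩ (fun y hy => ⟨hy.2, hball hy.1⟩)
  have hmem := hsub (show tcfPt p s' d ∈ _ from ⟨hs'', by simp [tcfPt]⟩)
  rw [connectedComponentIn_eq hmem] at hbd
  exact tcf_ext p w n s' d hs' hbd

theorem tcfPt_slope (p a : E3) (h0 : a 0 = 0) (hD : 0 < p 2 - a 2) :
    a = tcfPt p ((a 1 - p 1) / (p 2 - a 2)) (p 2 - a 2) := by
  funext i
  fin_cases i
  · simpa [tcfPt] using h0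
  · simp [tcfPt, div_mul_cancel₀ _ hD.ne']
  · simp [tcfPt]

theorem tcf_slopes
    (p : E3) (n : ℕ) (w : ℕ → E3) (M : ℕ) (hn : n = M + 2) (hM : 1 ≤ M)
    (hw0 : w 0 = ![0, p 1, p 2])
    (hwΓ : ∀ i < n, w i 0 = 0)
    (hbelow : ∀ i, 0 < i → i < n → w i 2 < p 2)
    (hfan : IsConvexFanAt {v : E3 | v 0 = 0} w n 0)
    (hgp : GeneralPosition w n) :
    ∃ S : ℝ → ℝ, (∀ k : ℕ, k ≤ M → S k = (w (k + 1) 1 - p 1) / (p 2 - w (k + 1) 2)) ∧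
      (StrictMonoOn S (Icc 0 (M : ℝ)) ∨ StrictAntiOn S (Icc 0 (M : ℝ))) := by
  obtain ⟨⟨-, hwinj, hwedge⟩, -, hker⟩ := hfan
  set u : ℕ → E3 := fun i => w (i + 1) with hu
  set γ : ℝ → E3 := tcfPath u M with hγdef
  have hγc : Continuous γ := tcfPath_cont u M
  have hγc1 : Continuous (fun t => γ t 1) := (continuous_apply 1).comp hγc
  have hγc2 : Continuous (fun t => γ t 2) := (continuous_apply 2).comp hγc
  set S : ℝ → ℝ := fun t => (γ t 1 - p 1) / (p 2 - γ t 2) with hS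
  set L : ℝ → ℝ := fun t => p 2 - γ t 2 with hL
  have huD : ∀ k, k ≤ M → 0 < p 2 - u k 2 := fun k hk => by
    have := hbelow (k + 1) (by omega) (by omega)
    simp only [hu]; linarith
  have hu0 : ∀ k, k ≤ M → u k 0 = 0 := fun k hk => hwΓ (k + 1) (by omega)
  have huinj : ∀ i, i ≤ M → ∀ j, j ≤ M → u i = u j → i = j := by
    intro i hi j hj h
    have := hwinj (i + 1) (by omega) (j + 1) (by omega) h
    omega
  have hloc : ∀ t ∈ Icc (0 : ℝ) M, ∃ (k : ℕ) (θ : ℝ), k + 1 ≤ M ∧ 0 ≤ θ ∧ θ ≤ 1 ∧ t = k + θ ∧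
      γ t = u k + θ • (u (k + 1) - u k) := by
    intro t ht
    obtain ⟨k, hk, h1, h2⟩ := tcf_locate M hM t ht.1 ht.2
    exact ⟨k, t - k, hk, by linarith, by linarith, by ring, tcfPath_eq u M k t hk h1 h2⟩
  have hedge : ∀ (k : ℕ) (θ : ℝ), k + 1 ≤ M → 0 ≤ θ → θ ≤ 1 →
      ((k : ℝ) + θ) ∈ Icc (0 : ℝ) M ∧ γ (k + θ) = u k + θ • (u (k + 1) - u k) := by
    intro k θ hk h0 h1
    have hk' : (k : ℝ) + 1 ≤ M := by exact_mod_cast hk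
    have hk0 : (0 : ℝ) ≤ k := Nat.cast_nonneg k
    refine ⟨⟨by linarith, by linarith⟩, ?_⟩
    have := tcfPath_eq u M k (k + θ) hk (by linarith) (by linarith)
    rw [hγdef, this]
    simp
  have hvert : ∀ k : ℕ, k ≤ M → ((k : ℝ) ∈ Icc (0 : ℝ) M) ∧ γ k = u k := by
    intro k hk
    refine ⟨⟨Nat.cast_nonneg k, by exact_mod_cast hk⟩, ?_⟩
    rcases hk.eq_or_lt with rfl | hlt
    · exact tcfPath_end u k k (le_refl _)
    · have := (hedge k 0 hlt (le_refl _) zero_le_one).2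
      simpa using this
  have hLpos : ∀ t ∈ Icc (0 : ℝ) M, 0 < L t := by
    intro t ht
    obtain ⟨k, θ, hk, h0, h1, -, he⟩ := hloc t ht
    have a1 := huD k (by omega)
    have a2 := huD (k + 1) (by omega)
    simp only [hL, he, Pi.add_apply, Pi.smul_apply, Pi.sub_apply, smul_eq_mul]
    rcases h0.eq_or_lt with rfl | h0
    · linarith
    · have := mul_pos h0 a2
      have := mul_nonneg (sub_nonneg.2 h1) a1.le
      nlinarith
  have hγ0 : ∀ t ∈ Icc (0 : ℝ) M, γ t 0 = 0 := by
    intro t ht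
    obtain ⟨k, θ, hk, h0, h1, -, he⟩ := hloc t ht
    simp [he, hu0 k (by omega), hu0 (k + 1) hk]
  have hpt : ∀ t ∈ Icc (0 : ℝ) M, γ t = tcfPt p (S t) (L t) := fun t ht =>
    tcfPt_slope p (γ t) (hγ0 t ht) (hLpos t ht)
  have hSv : ∀ k : ℕ, k ≤ M → S k = (u k 1 - p 1) / (p 2 - u k 2) := by
    intro k hk
    simp only [hS, (hvert k hk).2]
  have hSne : ∀ i, i ≤ M → ∀ j, j ≤ M → S i = S j → i = j := by
    intro i hi j hj hij
    by_contra hne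
    refine hgp 0 (by omega) (i + 1) (by omega) (j + 1) (by omega) (by omega) (by omega)
      (by omega) ?_
    rw [collinear_iff_of_mem (p₀ := w 0) (by simp)]
    refine ⟨![0, S i, -1], ?_⟩
    have aux : ∀ k : ℕ, k ≤ M → S k = S i → ∃ r : ℝ, w (k + 1) = r • ![0, S i, -1] +ᵥ w 0 := by
      intro k hk hki
      refine ⟨L k, ?_⟩
      have h1 := hpt k (hvert k hk).1
      rw [(hvert k hk).2, hki] at h1
      change u k = _
      rw [h1, hw0]
      funext c
      fin_cases c <;> simp [tcfPt] <;> ring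
    rintro q (rfl | rfl | rfl)
    · exact ⟨0, by simp⟩
    · exact aux i hi rfl
    · exact aux j hj hij.symm
  have haff : ∀ t ∈ Icc (0 : ℝ) M, ∀ c, S t = c ↔ γ t 1 - p 1 - c * (p 2 - γ t 2) = 0 := by
    intro t ht c
    have := hLpos t ht
    simp only [hS]
    rw [div_eq_iff this.ne', sub_eq_zero]
  have hafflt : ∀ t ∈ Icc (0 : ℝ) M, ∀ c, S t ≤ c ↔ γ t 1 - p 1 - c * (p 2 - γ t 2) ≤ 0 := by
    intro t ht c
    have := hLpos t ht
    simp only [hS]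
    rw [div_le_iff₀ this, sub_nonpos]
  have haffgt : ∀ t ∈ Icc (0 : ℝ) M, ∀ c, c ≤ S t ↔ 0 ≤ γ t 1 - p 1 - c * (p 2 - γ t 2) := by
    intro t ht c
    have := hLpos t ht
    simp only [hS]
    rw [le_div_iff₀ this, sub_nonneg]
  have hinterp : ∀ (k : ℕ) (θ : ℝ), k + 1 ≤ M → 0 ≤ θ → θ ≤ 1 → ∀ c,
      γ (k + θ) 1 - p 1 - c * (p 2 - γ (k + θ) 2) =
      (1 - θ) * (γ k 1 - p 1 - c * (p 2 - γ k 2)) +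
      θ * (γ (k + 1 : ℕ) 1 - p 1 - c * (p 2 - γ (k + 1 : ℕ) 2)) := by
    intro k θ hk h0 h1 c
    rw [(hedge k θ hk h0 h1).2, (hvert k (by omega)).2, (hvert (k + 1) hk).2]
    simp only [Pi.add_apply, Pi.smul_apply, Pi.sub_apply, smul_eq_mul]
    ring
  have hfin : ∀ s, {t ∈ Icc (0 : ℝ) M | S t = s}.Finite := by
    intro s
    have hsub : {t ∈ Icc (0 : ℝ) M | S t = s} ⊆ ⋃ k ∈ Finset.range M,
        {t | ∃ θ : ℝ, 0 ≤ θ ∧ θ ≤ 1 ∧ t = k + θ ∧ S t = s} := by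
      rintro t ⟨ht, hs⟩
      obtain ⟨k, θ, hk, h0, h1, rfl, he⟩ := hloc t ht
      simp only [mem_iUnion]
      exact ⟨k, Finset.mem_range.2 hk, θ, h0, h1, rfl, hs⟩
    refine Set.Finite.subset ?_ hsub
    apply Set.Finite.biUnion (Finset.finite_toSet _)
    intro k hk
    have hk : k + 1 ≤ M := Finset.mem_range.1 hk
    apply Set.Subsingleton.finite
    rintro _ ⟨θ, h0, h1, rfl, hs⟩ _ ⟨η, g0, g1, rfl, gs⟩
    rw [haff _ (hedge k θ hk h0 h1).1, hinterp k θ hk h0 h1] at hs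
    rw [haff _ (hedge k η hk g0 g1).1, hinterp k η hk g0 g1] at gs
    set A := γ k 1 - p 1 - s * (p 2 - γ k 2) with hA
    set B := γ (k + 1 : ℕ) 1 - p 1 - s * (p 2 - γ (k + 1 : ℕ) 2) with hB
    have hAB : (θ - η) * (B - A) = 0 := by linear_combination hs - gs
    rcases mul_eq_zero.1 hAB with h | h
    · rw [sub_eq_zero.1 h]
    · exfalso
      have hBA : B = A := sub_eq_zero.1 h
      have hA0 : A = 0 := by rw [hBA] at hs; linarith
      have e1 := (haff k (hvert k (by omega)).1 s).2 hA0
      have e2 := (haff _ (hvert (k + 1) hk).1 s).2 (hBA.trans hA0)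
      have := hSne k (by omega) (k + 1) hk (e1.trans e2.symm)
      omega
  have hextv : ∀ c, ((∀ τ ∈ Icc (0 : ℝ) M, S τ ≤ c) ∨ (∀ τ ∈ Icc (0 : ℝ) M, c ≤ S τ)) →
      ∀ t ∈ Icc (0 : ℝ) M, S t = c → ∃ k : ℕ, k ≤ M ∧ t = k := by
    intro c hc t ht hs
    obtain ⟨k, θ, hk, h0, h1, rfl, -⟩ := hloc t ht
    rw [haff _ ht, hinterp k θ hk h0 h1] at hs
    have hkI := (hvert k (by omega)).1
    have hkI' := (hvert (k + 1) hk).1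
    have hneq : ¬ (γ k 1 - p 1 - c * (p 2 - γ k 2) = 0 ∧
        γ (k + 1 : ℕ) 1 - p 1 - c * (p 2 - γ (k + 1 : ℕ) 2) = 0) := by
      rintro ⟨a1, a2⟩
      have := hSne k (by omega) (k + 1) hk
        (((haff k hkI c).2 a1).trans ((haff _ hkI' c).2 a2).symm)
      omega
    have hboth : (1 - θ) * (γ k 1 - p 1 - c * (p 2 - γ k 2)) = 0 ∧
        θ * (γ (k + 1 : ℕ) 1 - p 1 - c * (p 2 - γ (k + 1 : ℕ) 2)) = 0 := by
      rcases hc with hc | hc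
      · have b1 := (hafflt k hkI c).1 (hc _ hkI)
        have b2 := (hafflt _ hkI' c).1 (hc _ hkI')
        have c1 := mul_nonpos_of_nonneg_of_nonpos (sub_nonneg.2 h1) b1
        have c2 := mul_nonpos_of_nonneg_of_nonpos h0 b2
        constructor <;> linarith
      · have b1 := (haffgt k hkI c).1 (hc _ hkI)
        have b2 := (haffgt _ hkI' c).1 (hc _ hkI')
        have c1 := mul_nonneg (sub_nonneg.2 h1) b1
        have c2 := mul_nonneg h0 b2
        constructor <;> linarith
    rcases mul_eq_zero.1 hboth.1 with a | a
    · exact ⟨k + 1, hk, by push_cast; linarith⟩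
    · rcases mul_eq_zero.1 hboth.2 with b | b
      · exact ⟨k, by omega, by linarith⟩
      · exact absurd ⟨a, b⟩ hneq
  have hseg : ∀ (k : ℕ) (θ : ℝ), k + 1 ≤ M → 0 ≤ θ → θ ≤ 1 →
      γ (k + θ) ∈ segment ℝ (w (k + 1)) (w ((k + 1 + 1) % n)) := by
    intro k θ hk h0 h1
    rw [(hedge k θ hk h0 h1).2, Nat.mod_eq_of_lt (by omega), segment_eq_image']
    exact ⟨θ, ⟨h0, h1⟩, rfl⟩
  have hsame : ∀ (k : ℕ) (θ η : ℝ), k + 1 ≤ M → 0 ≤ θ → θ ≤ 1 → 0 ≤ η → η ≤ 1 →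
      γ (k + θ) = γ (k + η) → θ = η := by
    intro k θ η hk h0 h1 g0 g1 h
    rw [(hedge k θ hk h0 h1).2, (hedge k η hk g0 g1).2] at h
    have h2 : (θ - η) • (u (k + 1) - u k) = 0 := by
      rw [sub_smul, sub_eq_zero]; exact add_left_cancel h
    rcases smul_eq_zero.1 h2 with h3 | h3
    · linarith
    · have := huinj (k + 1) hk k (by omega) (sub_eq_zero.1 h3)
      omega
  have hisv : ∀ (k : ℕ) (θ : ℝ), k + 1 ≤ M → 0 ≤ θ → θ ≤ 1 →
      γ (k + θ) ∈ ({w (k + 1), w ((k + 1 + 1) % n)} : Set E3) →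
      ∃ j : ℕ, j ≤ M ∧ (k : ℝ) + θ = j := by
    intro k θ hk h0 h1 h
    rw [Nat.mod_eq_of_lt (by omega)] at h
    rcases h with h | h
    · refine ⟨k, by omega, ?_⟩
      have h2 := hsame k θ 0 hk h0 h1 (le_refl _) zero_le_one (by
        rw [h, add_zero, (hvert k (by omega)).2])
      linarith
    · refine ⟨k + 1, by omega, ?_⟩
      have h2 := hsame k θ 1 hk h0 h1 zero_le_one (le_refl _) (by
        have h3 := (hvert (k + 1) hk).2
        push_cast at h3
        rw [h3]; exact h)
      push_cast; linarith
  have hγinj : ∀ t ∈ Icc (0 : ℝ) M, ∀ t' ∈ Icc (0 : ℝ) M, γ t = γ t' → t = t' := by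
    intro t ht t' ht' h
    obtain ⟨k, θ, hk, h0, h1, rfl, -⟩ := hloc t ht
    obtain ⟨l, η, hl, g0, g1, rfl, -⟩ := hloc t' ht'
    by_cases hkl : k = l
    · subst hkl
      rw [hsame k θ η hk h0 h1 g0 g1 h]
    · have hmem : γ (k + θ) ∈ segment ℝ (w (k + 1)) (w ((k + 1 + 1) % n)) ∩
          segment ℝ (w (l + 1)) (w ((l + 1 + 1) % n)) :=
        ⟨hseg k θ hk h0 h1, by rw [h]; exact hseg l η hl g0 g1⟩
      rw [hwedge (k + 1) (by omega) (l + 1) (by omega) (by omega)] at hmem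
      obtain ⟨i, hi, ei⟩ := hisv k θ hk h0 h1 hmem.1
      obtain ⟨j, hj, ej⟩ := hisv l η hl g0 g1 (by rw [← h]; exact hmem.2)
      rw [ei, ej] at h ⊢
      rw [(hvert i hi).2, (hvert j hj).2] at h
      rw [huinj i hi j hj h]
  have hbdmem : ∀ t ∈ Icc (0 : ℝ) M, γ t ∈ polyBoundary w n := by
    intro t ht
    obtain ⟨k, θ, hk, h0, h1, rfl, -⟩ := hloc t ht
    simp only [polyBoundary, mem_iUnion]
    exact ⟨k + 1, Finset.mem_range.2 (by omega), hseg k θ hk h0 h1⟩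
  have hspoke : ∀ (k : ℕ) (s d : ℝ), k ≤ M → 0 < d → tcfPt p s d ∈ segment ℝ (w 0) (u k) →
      S k = s ∧ d ≤ L k := by
    intro k s d hk hd hx
    rw [segment_eq_image'] at hx
    obtain ⟨θ, hθ, he⟩ := hx
    have e1 := congrFun he 1
    have e2 := congrFun he 2
    simp only [Pi.add_apply, Pi.smul_apply, Pi.sub_apply, smul_eq_mul, hw0, tcfPt,
      Matrix.cons_val] at e1 e2
    have hDk := huD k hk
    have hθ0 : 0 < θ := by
      rcases hθ.1.eq_or_lt with h | h
      · rw [← h] at e2; linarith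
      · exact h
    have hdθ : d = θ * (p 2 - u k 2) := by linarith
    constructor
    · rw [hSv k hk, div_eq_iff hDk.ne']
      have : θ * (u k 1 - p 1) = θ * (s * (p 2 - u k 2)) := by
        rw [hdθ] at e1; linarith
      exact mul_left_cancel₀ hθ0.ne' this
    · simp only [hL, (hvert k hk).2]
      rw [hdθ]
      exact mul_le_of_le_one_left hDk.le hθ.2
  have hbd : ∀ s d : ℝ, 0 < d → tcfPt p s d ∈ polyBoundary w n →
      ∃ t ∈ Icc (0 : ℝ) M, S t = s ∧ d ≤ L t ∧ (t = 0 ∨ t = M ∨ d = L t) := by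
    intro s d hd hx
    simp only [polyBoundary, mem_iUnion] at hx
    obtain ⟨i, hi, hx⟩ := hx
    have hi : i < n := Finset.mem_range.1 hi
    rcases Nat.eq_zero_or_pos i with rfl | hipos
    · rw [Nat.mod_eq_of_lt (by omega)] at hx
      obtain ⟨h1, h2⟩ := hspoke 0 s d (by omega) hd hx
      exact ⟨(0 : ℕ), (hvert 0 (by omega)).1, h1, h2, Or.inl (by simp)⟩
    · by_cases hin : i = M + 1
      · subst hin
        rw [hn, Nat.mod_self, segment_symm] at hx
        obtain ⟨h1, h2⟩ := hspoke M s d (le_refl _) hd hx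
        exact ⟨M, (hvert M (le_refl _)).1, h1, h2, Or.inr (Or.inl rfl)⟩
      · obtain ⟨k, rfl⟩ : ∃ k, i = k + 1 := ⟨i - 1, by omega⟩
        have hk : k + 1 ≤ M := by omega
        rw [Nat.mod_eq_of_lt (by omega), segment_eq_image'] at hx
        obtain ⟨θ, hθ, he⟩ := hx
        obtain ⟨hI, h2⟩ := hedge k θ hk hθ.1 hθ.2
        have h3 : γ (k + θ) = tcfPt p s d := h2.trans he
        have hLd : L (k + θ) = d := by simp [hL, h3, tcfPt]
        have hSs : S (k + θ) = s := by
          simp only [hS, h3, tcfPt, Matrix.cons_val]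
          rw [add_sub_cancel_left, sub_sub_cancel, mul_div_cancel_right₀ _ hd.ne']
        exact ⟨k + θ, hI, hSs, hLd.ge, Or.inr (Or.inr hLd.symm)⟩
  have hreg : ∀ t ∈ Icc (0 : ℝ) M, ∀ d, 0 < d → d < L t →
      tcfPt p (S t) d ∈ polyRegion {v : E3 | v 0 = 0} w n := by
    intro t ht d hd hdL
    refine hker (γ t) (Or.inl (hbdmem t ht)) ?_
    rw [segment_eq_image']
    have hLp := hLpos t ht
    refine ⟨d / L t, ⟨by positivity, (div_le_one hLp).2 hdL.le⟩, ?_⟩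
    rw [hpt t ht, hw0]
    have e : d / L t * L t = d := div_mul_cancel₀ _ hLp.ne'
    funext c
    fin_cases c
    · simp [tcfPt]
    · simp [tcfPt]
      linear_combination (S t) * e
    · simp [tcfPt]
      linarith
  refine ⟨S, hSv, ?_⟩
  have hMpos : (0 : ℝ) < M := by exact_mod_cast hM
  refine tcf_core 0 M hMpos S L ?_ ?_ hLpos ?_ hfin ?_ ?_ ?_
  · intro t ht
    exact ((hγc1.sub continuous_const).continuousAt.div
      (continuous_const.sub hγc2).continuousAt (hLpos t ht).ne').continuousWithinAt
  · exact (continuous_const.sub hγc2).continuousOn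
  · intro t ht t' ht' h1 h2
    apply hγinj t ht t' ht'
    rw [hpt t ht, hpt t' ht', h1, h2]
  · intro t ht d hd hdL havoid hna hnb hfr
    refine tcf_ext2 p w n (S t) d ?_ ?_ (hreg t ht d hd hdL)
    · intro hB
      obtain ⟨τ, hτ, h1, h2, h3⟩ := hbd _ _ hd hB
      rcases h3 with rfl | rfl | h3
      · exact hna h1.symm
      · exact hnb h1.symm
      · exact havoid τ hτ h1 h3.symm
    · refine hfr.mono ?_
      intro s' hs' d' hd' hB
      obtain ⟨τ, hτ, h1, h2, -⟩ := hbd _ _ (hd.trans_le hd') hB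
      have := hs' τ hτ h1
      linarith
  · intro h
    have := hSne 0 (by omega) M (le_refl _) (by simpa using h)
    omega
  · intro c hc hex t ht hs
    obtain ⟨k, hk, rfl⟩ := hextv (S c) hex t ht hs
    rcases hc with rfl | rfl
    · have := hSne k hk 0 (by omega) (by simpa using hs)
      simp [this]
    · rw [hSne k hk M (le_refl _) hs]
end tcf

/-- Let `F = (v₀, v₁, …, v_{n-1})` be a convex fan in general position drawn in the plane
`Γ = {x = 0}` with convex kernel vertex `v₀ = (0, p₂, p₃)`, all other vertices having
`z`-coordinate less than `p₃`. Then `T = (f v₁, …, f v_{n-1})` is a terrain in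
`Ω = {z = 0}`: a simple polygonal chain whose vertices have strictly monotone
`y`-coordinates. -/
theorem terrain_from_convex_fan
    (p : E3) (hp1 : 0 < p 0) (hp3 : 0 < p 2)
    (f : E3 → E3) (hf : IsCentralProjC p f)
    (n : ℕ) (w : ℕ → E3)
    (hw0 : w 0 = ![0, p 1, p 2])
    (hwΓ : ∀ i < n, w i 0 = 0)
    (hbelow : ∀ i, 0 < i → i < n → w i 2 < p 2)
    (hfan : IsConvexFanAt {v : E3 | v 0 = 0} w n 0)
    (hgp : GeneralPosition w n) :
    IsSimpleChain (fun i => f (w (i + 1))) (n - 1) ∧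
      (StrictMonoOn (fun i : ℕ => f (w (i + 1)) 1) (Set.Iio (n - 1)) ∨
        StrictAntiOn (fun i : ℕ => f (w (i + 1)) 1) (Set.Iio (n - 1))) := by
  obtain ⟨M, hn⟩ : ∃ M, n = M + 2 := ⟨n - 2, by have := hfan.1.1; omega⟩
  have hM : 1 ≤ M := by have := hfan.1.1; omega
  obtain ⟨S, hS, hmono⟩ := tcf_slopes p n w M hn hM hw0 hwΓ hbelow hfan hgp
  have hn1 : n - 1 = M + 1 := by omega
  have hfy : ∀ k, k ≤ M → f (w (k + 1)) 1 = p 1 + p 2 * S k := by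
    intro k hk
    have hb := hbelow (k + 1) (by omega) (by omega)
    obtain ⟨hz, t, ht⟩ := hf (w (k + 1)) (hwΓ _ (by omega)) hb.ne
    have e1 := congrFun ht 1
    have e2 := congrFun ht 2
    simp only [Pi.add_apply, Pi.smul_apply, Pi.sub_apply, smul_eq_mul] at e1 e2
    have hD : p 2 - w (k + 1) 2 ≠ 0 := by linarith
    have htt : t = p 2 / (p 2 - w (k + 1) 2) := by
      rw [eq_div_iff hD]; linarith
    rw [e1, hS k hk, htt]
    ring
  have hI : ∀ k : ℕ, k ≤ M → (k : ℝ) ∈ Set.Icc (0 : ℝ) M := fun k hk =>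
    ⟨Nat.cast_nonneg k, by exact_mod_cast hk⟩
  rw [hn1]
  rcases hmono with hmono | hmono
  · have key : ∀ i j, i < j → j < M + 1 → f (w (i + 1)) 1 < f (w (j + 1)) 1 := by
      intro i j hij hj
      rw [hfy i (by omega), hfy j (by omega)]
      have := hmono (hI i (by omega)) (hI j (by omega)) (by exact_mod_cast hij)
      have := mul_lt_mul_of_pos_left this hp3
      linarith
    refine ⟨tcf_chain _ _ 1 ?_, Or.inl ?_⟩
    · intro i j hij hj
      simpa using key i j hij hj
    · intro i _ j hj hij
      exact key i j hij hj
  · have key : ∀ i j, i < j → j < M + 1 → f (w (j + 1)) 1 < f (w (i + 1)) 1 := by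
      intro i j hij hj
      rw [hfy i (by omega), hfy j (by omega)]
      have := hmono (hI i (by omega)) (hI j (by omega)) (by exact_mod_cast hij)
      have := mul_lt_mul_of_pos_left this hp3
      linarith
    refine ⟨tcf_chain _ _ (-1) ?_, Or.inr ?_⟩
    · intro i j hij hj
      simpa using key i j hij hj
    · intro i _ j hj hij
      exact key i j hij hj
end
end

section
/- Work in ℝ³ with Γ = {(x,y,z) : x = 0} and Ω = {(x,y,z) : z = 0}, fix p = (p₁,p₂,p₃) with p₁ > 0 and p₃ > 0, let f be the central projection from Γ to Ω through p, and let v₀ = (0,p₂,p₃). Let F = (v₀,v₁,…,v_{n−1}) be a convex fan in general position contained in Γ whose kernel convex vertex is v₀ and all of whose other vertices have z-coordinate strictly less than p₃, and let T = (f(v₁),…,f(v_{n−1})) be the resulting terrain in Ω. Then for all i, j ∈ {1,…,n−1}, the vertices v_i and v_j see each other in F if and only if f(v_i) and f(v_j) see each other in T. -/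
noncomputable section

/-- `a` sees `b` in the polygon `(w 0, …, w (n-1))` drawn in the plane `P`: the segment
joining them does not meet the exterior of the polygon, i.e. it stays in the closure. -/
def SeesInPoly (P : Set E3) (w : ℕ → E3) (n : ℕ) (a b : E3) : Prop :=
  segment ℝ a b ⊆ polyRegion P w n

/-- In the plane `Ω = {z = 0}`, with monotone axis `y` (coordinate `1`) and "above"
meaning the far side in the orthogonal in-plane direction `x` (here: smaller coordinate
`0`, the far side as seen from the projection point), the point `q` lies on or above the
segment from `a` to `b`: its `y`-coordinate is in the `y`-range of the segment and it is
on, or strictly on the far side of, the segment. -/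
def OnOrAbove (a b q : E3) : Prop :=
  ∃ t ∈ Set.Icc (0 : ℝ) 1,
    q 1 = (1 - t) * a 1 + t * b 1 ∧ q 0 ≤ (1 - t) * a 0 + t * b 0

/-- Vertices `u i` and `u j` of the terrain `(u 0, …, u (m-1))` in `Ω = {z = 0}` see each
other: no vertex of the terrain other than these two lies on or above the segment
joining them. -/
def SeesInTerrain (u : ℕ → E3) (m : ℕ) (i j : ℕ) : Prop :=
  ∀ k < m, k ≠ i → k ≠ j → ¬ OnOrAbove (u i) (u j) (u k)


/-- Coordinate description of a segment in `ℝ × ℝ`. -/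
theorem seg2_iff (a b x : ℝ × ℝ) : x ∈ segment ℝ a b ↔
    ∃ t : ℝ, 0 ≤ t ∧ t ≤ 1 ∧ x.1 = (1 - t) * a.1 + t * b.1 ∧ x.2 = (1 - t) * a.2 + t * b.2 := by
  constructor
  · rintro ⟨α, β, hα, hβ, hab, rfl⟩
    obtain rfl : α = 1 - β := by linarith
    refine ⟨β, hβ, by linarith, ?_, ?_⟩ <;> simp
  · rintro ⟨t, h0, h1, hx, hy⟩
    refine ⟨1 - t, t, by linarith, h0, by ring, ?_⟩
    ext <;> simp [hx, hy]

theorem seg2_unique {a b x y : ℝ × ℝ} (hab : a.1 ≠ b.1) (hx : x ∈ segment ℝ a b)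
    (hy : y ∈ segment ℝ a b) (hxy : x.1 = y.1) : x = y := by
  rw [seg2_iff] at hx hy
  obtain ⟨t, _, _, h1, h2⟩ := hx
  obtain ⟨t', _, _, h1', h2'⟩ := hy
  have : (t - t') * (b.1 - a.1) = 0 := by linarith
  have ht : t = t' := by
    rcases mul_eq_zero.1 this with h | h
    · linarith
    · exact absurd (by linarith) hab
  subst ht
  ext
  · exact hxy
  · rw [h2, h2']

theorem seg2_fst_bounds {a b x : ℝ × ℝ} (hx : x ∈ segment ℝ a b) :
    (∀ c, c ≤ a.1 → c ≤ b.1 → c ≤ x.1) ∧ (∀ c, a.1 ≤ c → b.1 ≤ c → x.1 ≤ c) ∧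
    (∀ c, c ≤ a.2 → c ≤ b.2 → c ≤ x.2) ∧ (∀ c, a.2 ≤ c → b.2 ≤ c → x.2 ≤ c) := by
  rw [seg2_iff] at hx
  obtain ⟨t, h0, h1, hx1, hx2⟩ := hx
  rw [hx1, hx2]
  refine ⟨?_, ?_, ?_, ?_⟩ <;> intro c h h' <;>
    nlinarith [mul_le_mul_of_nonneg_left h (sub_nonneg.2 h1), mul_le_mul_of_nonneg_left h' h0]

/-- The polygonal chain with vertices `u 0, …, u (M-1)`. -/
def chainSet (u : ℕ → ℝ × ℝ) (M : ℕ) : Set (ℝ × ℝ) :=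
  {x | ∃ k, k + 1 < M ∧ x ∈ segment ℝ (u k) (u (k + 1))}

theorem chainSet_preconnected (u : ℕ → ℝ × ℝ) (M : ℕ) : IsPreconnected (chainSet u M) := by
  have : chainSet u M = ⋃ k ∈ {k : ℕ | k + 1 < M}, segment ℝ (u k) (u (k + 1)) := by
    ext x; simp [chainSet]
  rw [this]
  apply IsPreconnected.biUnion_of_chain
  · constructor
    intro a ha b hb c hc
    simp only [Set.mem_ofPred_eq, Set.mem_Icc] at *
    omega
  · intro k _
    exact (convex_segment _ _).isPreconnected
  · intro k _ _
    refine ⟨u (k + 1), right_mem_segment _ _ _, ?_⟩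
    exact left_mem_segment _ _ _

theorem vertex_mem_chain (u : ℕ → ℝ × ℝ) (M : ℕ) (hM : 2 ≤ M) (k : ℕ) (hk : k < M) :
    u k ∈ chainSet u M := by
  by_cases h : k + 1 < M
  · exact ⟨k, h, left_mem_segment _ _ _⟩
  · refine ⟨k - 1, by omega, ?_⟩
    rw [show k - 1 + 1 = k by omega]
    exact right_mem_segment _ _ _

/-- The local openness hypothesis on the upward hull of the chain. -/
def OpenHyp (u : ℕ → ℝ × ℝ) (M : ℕ) : Prop :=
  ∀ s g g' : ℝ, (s, g') ∈ chainSet u M → g' ≤ g → (s, g) ∉ chainSet u M →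
    s ≠ (u 0).1 → s ≠ (u (M - 1)).1 →
    ∃ ε > 0, ∀ y1 y2 : ℝ, |y1 - s| < ε → |y2 - g| < ε → ∃ γ ≤ y2, (y1, γ) ∈ chainSet u M

theorem chain_snd_bdd (u : ℕ → ℝ × ℝ) (M : ℕ) : ∃ B : ℝ, (∀ k < M, (u k).2 ≤ B) ∧
    ∀ x ∈ chainSet u M, x.2 ≤ B := by
  have : ∃ B : ℝ, ∀ k < M, (u k).2 ≤ B := by
    obtain ⟨B, hB⟩ := ((Finset.range M).image fun k => (u k).2).exists_le
    exact ⟨B, fun k hk => hB _ (Finset.mem_image_of_mem (fun k => (u k).2) (Finset.mem_range.2 hk))⟩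
  obtain ⟨B, hB⟩ := this
  refine ⟨B, hB, ?_⟩
  rintro x ⟨k, hk, hx⟩
  exact (seg2_fst_bounds hx).2.2.2 B (hB _ (by omega)) (hB _ hk)

theorem argmin_end (u : ℕ → ℝ × ℝ) (M : ℕ) (hM : 2 ≤ M)
    (hs : ∀ i < M, ∀ j < M, (u i).1 = (u j).1 → i = j) (H : OpenHyp u M)
    (a : ℕ) (ha : a < M) (hmin : ∀ k < M, (u a).1 ≤ (u k).1) : a = 0 ∨ a = M - 1 := by
  by_contra hcon
  push Not at hcon
  obtain ⟨B, hB, hK⟩ := chain_snd_bdd u M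
  obtain ⟨ε, hε, h⟩ := H (u a).1 (B + 1) (u a).2 (vertex_mem_chain u M hM a ha)
    (by linarith [hB a ha]) (fun h => by have := hK _ h; simp at this; linarith)
    (fun h => hcon.1 (hs _ ha _ (by omega) h)) (fun h => hcon.2 (hs _ ha _ (by omega) h))
  obtain ⟨γ, _, k, hk, hx⟩ := h ((u a).1 - ε / 2) (B + 1)
    (by rw [abs_lt]; constructor <;> linarith) (by simpa using hε)
  have := (seg2_fst_bounds hx).1 _ (hmin _ (by omega)) (hmin _ hk)
  simp at this
  linarith

theorem argmax_end (u : ℕ → ℝ × ℝ) (M : ℕ) (hM : 2 ≤ M)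
    (hs : ∀ i < M, ∀ j < M, (u i).1 = (u j).1 → i = j) (H : OpenHyp u M)
    (a : ℕ) (ha : a < M) (hmax : ∀ k < M, (u k).1 ≤ (u a).1) : a = 0 ∨ a = M - 1 := by
  by_contra hcon
  push Not at hcon
  obtain ⟨B, hB, hK⟩ := chain_snd_bdd u M
  obtain ⟨ε, hε, h⟩ := H (u a).1 (B + 1) (u a).2 (vertex_mem_chain u M hM a ha)
    (by linarith [hB a ha]) (fun h => by have := hK _ h; simp at this; linarith)
    (fun h => hcon.1 (hs _ ha _ (by omega) h)) (fun h => hcon.2 (hs _ ha _ (by omega) h))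
  obtain ⟨γ, _, k, hk, hx⟩ := h ((u a).1 + ε / 2) (B + 1)
    (by rw [abs_lt]; constructor <;> linarith) (by simpa using hε)
  have := (seg2_fst_bounds hx).2.1 _ (hmax _ (by omega)) (hmax _ hk)
  simp at this
  linarith

/-- An extreme vertex is the only chain point on its vertical line. -/
theorem extreme_unique (u : ℕ → ℝ × ℝ) (M : ℕ)
    (hs : ∀ i < M, ∀ j < M, (u i).1 = (u j).1 → i = j)
    (a : ℕ) (ha : a < M)
    (hext : (∀ k < M, (u a).1 ≤ (u k).1) ∨ (∀ k < M, (u k).1 ≤ (u a).1))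
    (x : ℝ × ℝ) (hx : x ∈ chainSet u M) (hxa : x.1 = (u a).1) : x = u a := by
  obtain ⟨k, hk, hxk⟩ := hx
  have hne : (u k).1 ≠ (u (k + 1)).1 := fun h => by have := hs _ (by omega) _ hk h; omega
  have key : a = k ∨ a = k + 1 := by
    by_contra hcon
    push Not at hcon
    have h1 : (u a).1 ≠ (u k).1 := fun h => hcon.1 (hs _ ha _ (by omega) h)
    have h2 : (u a).1 ≠ (u (k + 1)).1 := fun h => hcon.2 (hs _ ha _ hk h)
    rcases hext with h | h
    · have a1 := lt_of_le_of_ne (h k (by omega)) h1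
      have a2 := lt_of_le_of_ne (h (k + 1) hk) h2
      have := (seg2_fst_bounds hxk).1 (min (u k).1 (u (k + 1)).1) (min_le_left _ _) (min_le_right _ _)
      have := lt_min a1 a2
      linarith
    · have a1 := lt_of_le_of_ne (h k (by omega)) h1.symm
      have a2 := lt_of_le_of_ne (h (k + 1) hk) h2.symm
      have := (seg2_fst_bounds hxk).2.1 (max (u k).1 (u (k + 1)).1) (le_max_left _ _) (le_max_right _ _)
      have := max_lt a1 a2
      linarith
  rcases key with rfl | rfl
  · exact seg2_unique hne hxk (left_mem_segment _ _ _) hxa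
  · exact seg2_unique hne hxk (right_mem_segment _ _ _) hxa

theorem ends_unique (u : ℕ → ℝ × ℝ) (M : ℕ) (hM : 2 ≤ M)
    (hs : ∀ i < M, ∀ j < M, (u i).1 = (u j).1 → i = j) (H : OpenHyp u M)
    (a : ℕ) (ha : a = 0 ∨ a = M - 1)
    (x : ℝ × ℝ) (hx : x ∈ chainSet u M) (hxa : x.1 = (u a).1) : x = u a := by
  have hne : (Finset.range M).Nonempty := ⟨0, by simp; omega⟩
  obtain ⟨b, hb, hbm⟩ := Finset.exists_min_image (Finset.range M) (fun k => (u k).1) hne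
  obtain ⟨c, hc, hcm⟩ := Finset.exists_max_image (Finset.range M) (fun k => (u k).1) hne
  simp only [Finset.mem_range] at *
  have h1 := argmin_end u M hM hs H b hb hbm
  have h2 := argmax_end u M hM hs H c hc hcm
  have hbc : b ≠ c := by
    rintro rfl
    have e0 := hs 0 (by omega) 1 (by omega) (by
      have := hbm 0 (by omega); have := hcm 0 (by omega)
      have := hbm 1 (by omega); have := hcm 1 (by omega); linarith)
    omega
  have : a = b ∨ a = c := by omega
  rcases this with rfl | rfl
  · exact extreme_unique u M hs a hb (Or.inl hbm) x hx hxa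
  · exact extreme_unique u M hs a hc (Or.inr hcm) x hx hxa

/-- `x` is the lowest chain point on its vertical line. -/
def Lowest (u : ℕ → ℝ × ℝ) (M : ℕ) (x : ℝ × ℝ) : Prop :=
  ∀ y ∈ chainSet u M, y.1 = x.1 → x.2 ≤ y.2

theorem vertical_finite (u : ℕ → ℝ × ℝ) (M : ℕ)
    (hs : ∀ i < M, ∀ j < M, (u i).1 = (u j).1 → i = j) (s : ℝ) :
    {g : ℝ | (s, g) ∈ chainSet u M}.Finite := by
  have : {g : ℝ | (s, g) ∈ chainSet u M} =
      ⋃ k ∈ {k : ℕ | k + 1 < M}, {g : ℝ | (s, g) ∈ segment ℝ (u k) (u (k + 1))} := by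
    ext x; simp [chainSet]
  rw [this]
  apply Set.Finite.biUnion
  · exact (Set.finite_lt_nat M).subset (fun k hk => by simp at *; omega)
  · intro k hk
    apply Set.Subsingleton.finite
    intro a ha b hb
    have := seg2_unique (fun h => by have := hs k (by simp at hk; omega) _ hk h; omega) ha hb rfl
    simpa using this

theorem not_lowest_open (u : ℕ → ℝ × ℝ) (M : ℕ) (hM : 2 ≤ M)
    (hs : ∀ i < M, ∀ j < M, (u i).1 = (u j).1 → i = j) (H : OpenHyp u M)
    (x : ℝ × ℝ) (hx : x ∈ chainSet u M) (hl : ¬ Lowest u M x) :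
    ∃ ε > 0, ∀ y ∈ chainSet u M, |y.1 - x.1| < ε → |y.2 - x.2| < ε → ¬ Lowest u M y := by
  unfold Lowest at hl
  push Not at hl
  obtain ⟨y, hy, hyx, hlt⟩ := hl
  have hend : ∀ a, (a = 0 ∨ a = M - 1) → x.1 ≠ (u a).1 := by
    intro a ha h
    have e1 := ends_unique u M hM hs H a ha x hx h
    have e2 := ends_unique u M hM hs H a ha y hy (hyx.trans h)
    rw [e1, e2] at hlt
    exact lt_irrefl _ hlt
  obtain ⟨g, hg, hgn⟩ := (Set.Ioo_infinite hlt).exists_notMem_finite (vertical_finite u M hs x.1)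
  obtain ⟨ε, hε, h⟩ := H x.1 g y.2 (by rw [← hyx]; exact hy) hg.1.le hgn
    (hend _ (Or.inl rfl)) (hend _ (Or.inr rfl))
  refine ⟨min ε (x.2 - g), lt_min hε (by linarith [hg.2]), ?_⟩
  intro z hz h1 h2 hlow
  obtain ⟨γ, hγ, hγK⟩ := h z.1 g (lt_of_lt_of_le h1 (min_le_left _ _)) (by simpa using hε)
  have := hlow _ hγK rfl
  simp at this
  have := abs_lt.1 (lt_of_lt_of_le h2 (min_le_right _ _))
  linarith [this.1]

theorem lowest_local (u : ℕ → ℝ × ℝ) (M : ℕ) (x : ℝ × ℝ) (hl : Lowest u M x) :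
    ∃ ε > 0, ∀ k, k + 1 < M → ∀ y ∈ segment ℝ (u k) (u (k + 1)), |y.1 - x.1| < ε → y.2 < x.2 + ε →
      x ∈ segment ℝ (u k) (u (k + 1)) := by
  have h1 : ∀ k ∈ Finset.range M, ∀ᶠ ε in nhdsWithin (0 : ℝ) (Set.Ioi 0), k + 1 < M →
      ∀ y ∈ segment ℝ (u k) (u (k + 1)), |y.1 - x.1| < ε → y.2 < x.2 + ε →
      x ∈ segment ℝ (u k) (u (k + 1)) := by
    intro k _
    by_cases hk : k + 1 < M
    swap
    · exact Filter.Eventually.of_forall fun ε h => absurd h hk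
    by_cases hx : x ∈ segment ℝ (u k) (u (k + 1))
    · exact Filter.Eventually.of_forall fun ε _ _ _ _ _ => hx
    have hcomp : IsCompact (segment ℝ (u k) (u (k + 1))) := by
      rw [segment_eq_image]
      exact isCompact_Icc.image (by fun_prop)
    obtain ⟨z, hz, hzm⟩ := hcomp.exists_isMinOn ⟨_, left_mem_segment _ _ _⟩
      (f := fun y : ℝ × ℝ => max |y.1 - x.1| (y.2 - x.2)) (by fun_prop)
    have hpos : 0 < max |z.1 - x.1| (z.2 - x.2) := by
      by_contra hn
      push Not at hn
      have a1 := (max_le_iff.1 hn).1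
      have a2 := (max_le_iff.1 hn).2
      have a3 : z.1 - x.1 = 0 := abs_eq_zero.1 (le_antisymm a1 (abs_nonneg _))
      have a4 := hl z ⟨k, hk, hz⟩ (by linarith)
      have : x = z := by ext <;> linarith
      exact hx (this ▸ hz)
    filter_upwards [Ioo_mem_nhdsGT hpos] with ε hε _ y hy h1 h2
    have := hzm hy
    simp only [Set.mem_ofPred_eq] at this
    have h3 : max |y.1 - x.1| (y.2 - x.2) < ε := max_lt h1 (by linarith)
    linarith [hε.2]
  have h2 := ((Finset.range M).eventually_all).2 h1
  obtain ⟨ε, hε, hε0⟩ := (h2.and self_mem_nhdsWithin).exists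
  exact ⟨ε, hε0, fun k hk => hε k (Finset.mem_range.2 (by omega)) hk⟩

def SimpleHyp (u : ℕ → ℝ × ℝ) (M : ℕ) : Prop :=
  ∀ k l x, k < l → l + 1 < M → x ∈ segment ℝ (u k) (u (k + 1)) →
    x ∈ segment ℝ (u l) (u (l + 1)) → l = k + 1 ∧ x = u l

/-- On an edge through its endpoint `a`, the offsets from `a` have the sign of `b - a`. -/
theorem seg2_side {a b z : ℝ × ℝ} (hz : z ∈ segment ℝ a b) :
    ∃ t : ℝ, 0 ≤ t ∧ z.1 - a.1 = t * (b.1 - a.1) := by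
  rw [seg2_iff] at hz
  obtain ⟨t, h0, _, h, _⟩ := hz
  exact ⟨t, h0, by rw [h]; ring⟩

theorem lowest_not_turn (u : ℕ → ℝ × ℝ) (M : ℕ) (hM : 2 ≤ M)
    (hs : ∀ i < M, ∀ j < M, (u i).1 = (u j).1 → i = j) (H : OpenHyp u M) (hsim : SimpleHyp u M)
    (c : ℕ) (hc : c + 2 < M) (hl : Lowest u M (u (c + 1)))
    (y y' : ℝ × ℝ) (hy : y ∈ segment ℝ (u c) (u (c + 1)))
    (hy' : y' ∈ segment ℝ (u (c + 1)) (u (c + 2))) (h : y.1 = y'.1) (hne : y ≠ y') : False := by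
  obtain ⟨ε, hε, hloc⟩ := lowest_local u M _ hl
  have n1 : (u c).1 ≠ (u (c + 1)).1 := fun h => by have := hs _ (by omega) _ (by omega) h; omega
  have n2 : (u (c + 1)).1 ≠ (u (c + 2)).1 := fun h => by
    have := hs _ (by omega) _ (by omega) h; omega
  have hyne : y.1 ≠ (u (c + 1)).1 := by
    intro h'
    have e1 := seg2_unique n1 hy (right_mem_segment _ _ _) h'
    have e2 := seg2_unique n2 hy' (left_mem_segment _ _ _) (h.symm.trans h')
    exact hne (e1.trans e2.symm)
  -- edges through the vertex
  have hedge : ∀ k, k + 1 < M → u (c + 1) ∈ segment ℝ (u k) (u (k + 1)) → k = c ∨ k = c + 1 := by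
    intro k hk hx
    rcases lt_trichotomy k (c + 1) with hlt | heq | hgt
    · have := hsim k (c + 1) _ hlt (by omega) hx (left_mem_segment _ _ _)
      omega
    · exact Or.inr heq
    · have := hsim (c + 1) k _ hgt hk (left_mem_segment _ _ _) hx
      have := hs _ (by omega) _ (by omega) (congrArg Prod.fst this.2)
      omega
  have hnot : ((u (c + 1)).1, (u (c + 1)).2 + ε / 2) ∉ chainSet u M := by
    rintro ⟨k, hk, hx⟩
    have h1 := hloc k hk _ hx (by simpa using hε) (by simp; linarith)
    have := seg2_unique (fun h => by have := hs k (by omega) _ hk h; omega) hx h1 rfl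
    have := congrArg Prod.snd this
    simp at this
    linarith
  obtain ⟨δ, hδ, hD⟩ := H _ _ (u (c + 1)).2 (vertex_mem_chain u M hM (c + 1) (by omega))
    (by linarith) hnot (fun h => by have := hs _ (by omega) _ (by omega) h; omega)
    (fun h => by have := hs _ (by omega) _ (by omega) h; omega)
  rw [segment_symm] at hy
  obtain ⟨t, ht, e1⟩ := seg2_side hy
  obtain ⟨t', ht', e2⟩ := seg2_side hy'
  set s := (u (c + 1)).1 with hsdef
  set η := min δ ε / 2 with hη
  have hη0 : 0 < η := by have := lt_min hδ hε; linarith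
  have hη1 : η < δ := by have := min_le_left δ ε; linarith
  have hη2 : η < ε := by have := min_le_right δ ε; linarith
  rcases lt_or_gt_of_ne hyne with hlt | hgt
  · have s1 : (u c).1 - s < 0 := by by_contra hh; push Not at hh; nlinarith
    have s2 : (u (c + 2)).1 - s < 0 := by by_contra hh; push Not at hh; nlinarith
    obtain ⟨γ, hγ, k, hk, hz⟩ := hD (s + η) ((u (c + 1)).2 + ε / 2)
      (by simpa [abs_of_pos hη0] using hη1) (by simpa using hδ)
    have hx := hloc k hk _ hz (by simpa [abs_of_pos hη0] using hη2) (by simp; linarith)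
    rcases hedge k hk hx with rfl | rfl
    · rw [segment_symm] at hz
      obtain ⟨r, hr, e⟩ := seg2_side hz
      simp only [← hsdef] at e
      nlinarith
    · obtain ⟨r, hr, e⟩ := seg2_side hz
      simp only [← hsdef] at e
      have : (u (c + 1 + 1)).1 - s < 0 := s2
      nlinarith
  · have s1 : 0 < (u c).1 - s := by by_contra hh; push Not at hh; nlinarith
    have s2 : 0 < (u (c + 2)).1 - s := by by_contra hh; push Not at hh; nlinarith
    obtain ⟨γ, hγ, k, hk, hz⟩ := hD (s - η) ((u (c + 1)).2 + ε / 2)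
      (by simpa [abs_of_pos hη0] using hη1) (by simpa using hδ)
    have hx := hloc k hk _ hz (by simpa [abs_of_pos hη0] using hη2) (by simp; linarith)
    rcases hedge k hk hx with rfl | rfl
    · rw [segment_symm] at hz
      obtain ⟨r, hr, e⟩ := seg2_side hz
      simp only [← hsdef] at e
      nlinarith
    · obtain ⟨r, hr, e⟩ := seg2_side hz
      simp only [← hsdef] at e
      have : 0 < (u (c + 1 + 1)).1 - s := s2
      nlinarith

theorem lowest_open (u : ℕ → ℝ × ℝ) (M : ℕ) (hM : 2 ≤ M)
    (hs : ∀ i < M, ∀ j < M, (u i).1 = (u j).1 → i = j) (H : OpenHyp u M) (hsim : SimpleHyp u M)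
    (x : ℝ × ℝ) (hl : Lowest u M x) :
    ∃ ε > 0, ∀ y ∈ chainSet u M, |y.1 - x.1| < ε → |y.2 - x.2| < ε → Lowest u M y := by
  obtain ⟨ε, hε, hloc⟩ := lowest_local u M _ hl
  refine ⟨ε, hε, ?_⟩
  rintro y ⟨k, hk, hy⟩ h1 h2
  by_contra hn
  unfold Lowest at hn
  push Not at hn
  obtain ⟨y', ⟨l, hl', hy'⟩, hyy, hlt⟩ := hn
  have h3 := (abs_lt.1 h2).2
  have hxk := hloc k hk y hy h1 (by linarith)
  have hxl := hloc l hl' y' hy' (by rw [hyy]; exact h1) (by linarith)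
  have hne : y ≠ y' := by rintro rfl; exact lt_irrefl _ hlt
  rcases lt_trichotomy k l with h | h | h
  · obtain ⟨rfl, rfl⟩ := hsim k l x h hl' hxk hxl
    exact lowest_not_turn u M hM hs H hsim k (by omega) hl y y' hy hy' hyy.symm hne
  · subst h
    exact hne (seg2_unique (fun h => by have := hs k (by omega) _ hk h; omega) hy hy' hyy.symm)
  · obtain ⟨rfl, rfl⟩ := hsim l k x h hk hxl hxk
    exact lowest_not_turn u M hM hs H hsim l (by omega) hl y' y hy' hy hyy hne.symm

theorem all_lowest (u : ℕ → ℝ × ℝ) (M : ℕ) (hM : 2 ≤ M)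
    (hs : ∀ i < M, ∀ j < M, (u i).1 = (u j).1 → i = j) (H : OpenHyp u M) (hsim : SimpleHyp u M)
    (x : ℝ × ℝ) (hx : x ∈ chainSet u M) : Lowest u M x := by
  have h0 : Lowest u M (u 0) := fun y hy h => by
    rw [ends_unique u M hM hs H 0 (Or.inl rfl) y hy h]
  have := (chainSet_preconnected u M).induction₂ (fun x y => (Lowest u M x ↔ Lowest u M y))
    (by
      intro x hx
      have : ∃ ε > 0, ∀ y ∈ chainSet u M, |y.1 - x.1| < ε → |y.2 - x.2| < ε →
          (Lowest u M x ↔ Lowest u M y) := by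
        by_cases hl : Lowest u M x
        · obtain ⟨ε, hε, h⟩ := lowest_open u M hM hs H hsim x hl
          exact ⟨ε, hε, fun y hy h1 h2 => iff_of_true hl (h y hy h1 h2)⟩
        · obtain ⟨ε, hε, h⟩ := not_lowest_open u M hM hs H x hx hl
          exact ⟨ε, hε, fun y hy h1 h2 => iff_of_false hl (h y hy h1 h2)⟩
      obtain ⟨ε, hε, h⟩ := this
      filter_upwards [self_mem_nhdsWithin, mem_nhdsWithin_of_mem_nhds (Metric.ball_mem_nhds x hε)]
        with y hy hd
      rw [Metric.mem_ball, Prod.dist_eq, max_lt_iff, Real.dist_eq, Real.dist_eq] at hd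
      exact h y hy hd.1 hd.2)
    (fun x y z _ _ _ h1 h2 => h1.trans h2) (fun x y _ _ h => h.symm)
    (vertex_mem_chain u M hM 0 (by omega)) hx
  exact this.1 h0

theorem discrete_ivt (S : ℕ → ℝ) (s : ℝ) (i d : ℕ) (h1 : S i ≤ s) (h2 : s ≤ S (i + d)) (hd : 0 < d) :
    ∃ k, i ≤ k ∧ k < i + d ∧ S k ≤ s ∧ s ≤ S (k + 1) := by
  induction d with
  | zero => omega
  | succ d ih =>
    by_cases h : S (i + d) ≤ s
    · exact ⟨i + d, by omega, by omega, h, h2⟩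
    · rcases Nat.eq_zero_or_pos d with rfl | hd'
      · exact absurd h1 h
      · obtain ⟨k, a, b, c⟩ := ih (by linarith) hd'
        exact ⟨k, a, by omega, c⟩

/-- An edge lying over `s`, for `s` between the abscissae of two vertices. -/
theorem edge_over (u : ℕ → ℝ × ℝ) (M i j : ℕ) (hi : i < M) (hj : j < M) (hij : i ≠ j) (s : ℝ)
    (h1 : (u i).1 ≤ s) (h2 : s ≤ (u j).1) :
    ∃ a b, ((b = a + 1 ∧ b < M) ∨ (a = b + 1 ∧ a < M)) ∧ (u a).1 ≤ s ∧ s ≤ (u b).1 := by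
  rcases lt_or_gt_of_ne hij with h | h
  · obtain ⟨k, a, b, c, d⟩ := discrete_ivt (fun k => (u k).1) s i (j - i) h1
      (by rw [show i + (j - i) = j by omega]; exact h2) (by omega)
    exact ⟨k, k + 1, Or.inl ⟨rfl, by omega⟩, c, d⟩
  · obtain ⟨k, a, b, c, d⟩ := discrete_ivt (fun k => -(u k).1) (-s) j (i - j) (by simpa using h2)
      (by rw [show j + (i - j) = i by omega]; simpa using h1) (by omega)
    exact ⟨k + 1, k, Or.inr ⟨rfl, by omega⟩, by simpa using d, by simpa using c⟩

/-- Height over `s` on the line through `a` and `b`; cleared-denominator comparison. -/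
theorem below_chain (u : ℕ → ℝ × ℝ) (M : ℕ) (hM : 2 ≤ M)
    (hs : ∀ i < M, ∀ j < M, (u i).1 = (u j).1 → i = j)
    (hlow : ∀ x ∈ chainSet u M, Lowest u M x)
    (i j : ℕ) (hi : i < M) (hj : j < M) (hij : (u i).1 < (u j).1)
    (hv : ∀ k < M, k ≠ i → k ≠ j → ¬ ∃ t ∈ Set.Icc (0 : ℝ) 1,
      (u k).1 = (1 - t) * (u i).1 + t * (u j).1 ∧ (1 - t) * (u i).2 + t * (u j).2 ≤ (u k).2)
    (y : ℝ × ℝ) (hy : y ∈ segment ℝ (u i) (u j)) :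
    ∃ γ ≤ y.2, (y.1, γ) ∈ chainSet u M := by
  -- the affine function of the segment
  set m := ((u j).2 - (u i).2) / ((u j).1 - (u i).1) with hm
  have hpos : 0 < (u j).1 - (u i).1 := by linarith
  have hmm : m * ((u j).1 - (u i).1) = (u j).2 - (u i).2 := by rw [hm]; field_simp
  obtain ⟨b1, b2, -, -⟩ := seg2_fst_bounds hy
  have hy1 := b1 _ le_rfl hij.le
  have hy2 := b2 _ hij.le le_rfl
  have hL : y.2 = (u i).2 + m * (y.1 - (u i).1) := by
    obtain ⟨t, _, _, e1, e2⟩ := (seg2_iff _ _ _).1 hy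
    rw [e1, e2]; linear_combination (-t) * hmm
  have hvert : ∀ k < M, (u i).1 ≤ (u k).1 → (u k).1 ≤ (u j).1 →
      (u k).2 ≤ (u i).2 + m * ((u k).1 - (u i).1) := by
    intro k hk h1 h2
    by_cases hki : k = i
    · subst hki; simp
    by_cases hkj : k = j
    · subst hkj; linarith
    by_contra hcon
    push Not at hcon
    apply hv k hk hki hkj
    have e : ((u k).1 - (u i).1) / ((u j).1 - (u i).1) * ((u j).1 - (u i).1)
        = (u k).1 - (u i).1 := by field_simp
    refine ⟨((u k).1 - (u i).1) / ((u j).1 - (u i).1), ⟨by apply div_nonneg <;> linarith, ?_⟩, ?_, ?_⟩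
    · rw [div_le_one hpos]; linarith
    · linear_combination -e
    · have : (1 - ((u k).1 - (u i).1) / ((u j).1 - (u i).1)) * (u i).2 +
          ((u k).1 - (u i).1) / ((u j).1 - (u i).1) * (u j).2 =
          (u i).2 + m * ((u k).1 - (u i).1) := by
        rw [hm]; field_simp; ring
      linarith
  obtain ⟨a, b, hab, ha, hb⟩ := edge_over u M i j hi hj (by rintro rfl; linarith) y.1 hy1 hy2
  have haM : a < M := by omega
  have hbM : b < M := by omega
  have hedge : segment ℝ (u a) (u b) ⊆ chainSet u M := by
    rcases hab with ⟨rfl, h⟩ | ⟨rfl, h⟩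
    · exact fun x hx => ⟨a, h, hx⟩
    · exact fun x hx => ⟨b, h, by rw [segment_symm]; exact hx⟩
  have hablt : (u a).1 < (u b).1 := by
    refine lt_of_le_of_ne (ha.trans hb) fun h => ?_
    have := hs _ haM _ hbM h
    omega
  have hd : 0 < (u b).1 - (u a).1 := by linarith
  set q := ((u b).2 - (u a).2) / ((u b).1 - (u a).1) with hq
  have hqq : q * ((u b).1 - (u a).1) = (u b).2 - (u a).2 := by rw [hq]; field_simp
  have hmem : ∀ s, (u a).1 ≤ s → s ≤ (u b).1 →
      (s, (u a).2 + q * (s - (u a).1)) ∈ chainSet u M := by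
    intro s h1 h2
    apply hedge
    rw [seg2_iff]
    refine ⟨(s - (u a).1) / ((u b).1 - (u a).1), by apply div_nonneg <;> linarith, ?_, ?_, ?_⟩
    · rw [div_le_one hd]; linarith
    · simp; field_simp; ring
    · simp; rw [hq]; field_simp; ring
  refine ⟨_, ?_, hmem y.1 ha hb⟩
  -- left end
  have hleft : ∃ s, (u a).1 ≤ s ∧ s ≤ y.1 ∧
      (u a).2 + q * (s - (u a).1) ≤ (u i).2 + m * (s - (u i).1) := by
    by_cases h : (u i).1 ≤ (u a).1
    · refine ⟨(u a).1, le_rfl, ha, ?_⟩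
      have := hvert a haM h (by linarith)
      linarith
    · push Not at h
      refine ⟨(u i).1, h.le, hy1, ?_⟩
      have := hlow _ (hmem (u i).1 h.le (by linarith)) _ (vertex_mem_chain u M hM i hi) rfl
      simp at this
      linarith
  have hright : ∃ s, y.1 ≤ s ∧ s ≤ (u b).1 ∧
      (u a).2 + q * (s - (u a).1) ≤ (u i).2 + m * (s - (u i).1) := by
    by_cases h : (u b).1 ≤ (u j).1
    · refine ⟨(u b).1, hb, le_rfl, ?_⟩
      have := hvert b hbM (by linarith) h
      linarith
    · push Not at h
      refine ⟨(u j).1, hy2, h.le, ?_⟩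
      have := hlow _ (hmem (u j).1 (by linarith) h.le) _ (vertex_mem_chain u M hM j hj) rfl
      simp at this
      linarith
  obtain ⟨s1, _, l2, l3⟩ := hleft
  obtain ⟨s2, r1, _, r3⟩ := hright
  rw [hL]
  rcases le_total q m with h | h
  · nlinarith
  · nlinarith

theorem planar_main (u : ℕ → ℝ × ℝ) (M : ℕ) (hM : 2 ≤ M)
    (hs : ∀ i < M, ∀ j < M, (u i).1 = (u j).1 → i = j) (H : OpenHyp u M) (hsim : SimpleHyp u M)
    (i j : ℕ) (hi : i < M) (hj : j < M) (hij : i ≠ j)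
    (hgp : ∀ k < M, k ≠ i → k ≠ j → u k ∉ segment ℝ (u i) (u j)) :
    (∀ y ∈ segment ℝ (u i) (u j), ∃ γ ≤ y.2, (y.1, γ) ∈ chainSet u M) ↔
    ∀ k < M, k ≠ i → k ≠ j → ¬ ∃ t ∈ Set.Icc (0 : ℝ) 1,
      (u k).1 = (1 - t) * (u i).1 + t * (u j).1 ∧ (1 - t) * (u i).2 + t * (u j).2 ≤ (u k).2 := by
  have hlow := all_lowest u M hM hs H hsim
  constructor
  · rintro h k hk hki hkj ⟨t, ⟨h0, h1⟩, e1, e2⟩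
    have hseg : ((u k).1, (1 - t) * (u i).2 + t * (u j).2) ∈ segment ℝ (u i) (u j) :=
      (seg2_iff _ _ _).2 ⟨t, h0, h1, e1, rfl⟩
    obtain ⟨γ, hγ, hK⟩ := h _ hseg
    have := hlow _ (vertex_mem_chain u M hM k hk) _ hK rfl
    simp at this hγ
    apply hgp k hk hki hkj
    have e : (u k).2 = (1 - t) * (u i).2 + t * (u j).2 := by linarith
    rw [← e] at hseg
    exact hseg
  · intro hv y hy
    rcases lt_or_gt_of_ne (fun h => hij (hs _ hi _ hj h)) with h | h
    · exact below_chain u M hM hs hlow i j hi hj h hv y hy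
    · refine below_chain u M hM hs hlow j i hj hi h ?_ y (by rw [segment_symm]; exact hy)
      rintro k hk h1 h2 ⟨t, ⟨t0, t1⟩, e1, e2⟩
      exact hv k hk h2 h1 ⟨1 - t, ⟨by linarith, by linarith⟩, by linarith, by linarith⟩

/-- The chart `(slope, inverse height)` seen from the vanishing point. -/
def phi (p a : E3) : ℝ × ℝ := ((a 1 - p 1) / (p 2 - a 2), 1 / (p 2 - a 2))

/-- Inverse of the chart. -/
def psi (p : E3) (d : ℝ × ℝ) : E3 := ![0, p 1 + d.1 / d.2, p 2 - 1 / d.2]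

theorem phi_psi (p : E3) (d : ℝ × ℝ) (hd : 0 < d.2) : phi p (psi p d) = d := by
  ext
  · simp [phi, psi]; field_simp
  · simp [phi, psi]

theorem psi_phi (p a : E3) (h0 : a 0 = 0) (h2 : a 2 < p 2) : psi p (phi p a) = a := by
  have : p 2 - a 2 ≠ 0 := by linarith
  ext c
  fin_cases c
  · simp [psi, h0]
  · simp [phi, psi]; field_simp; ring
  · simp [phi, psi]

theorem phi_snd_pos (p a : E3) (h2 : a 2 < p 2) : 0 < (phi p a).2 := by
  simp [phi]; exact h2

theorem psi_below (p : E3) (d : ℝ × ℝ) (hd : 0 < d.2) : psi p d 2 < p 2 := by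
  simp [psi]; exact hd

theorem seg3_iff (a b x : E3) : x ∈ segment ℝ a b ↔
    ∃ t : ℝ, 0 ≤ t ∧ t ≤ 1 ∧ ∀ c, x c = (1 - t) * a c + t * b c := by
  constructor
  · rintro ⟨α, β, hα, hβ, hab, rfl⟩
    obtain rfl : α = 1 - β := by linarith
    exact ⟨β, hβ, by linarith, fun c => by simp⟩
  · rintro ⟨t, h0, h1, hx⟩
    refine ⟨1 - t, t, by linarith, h0, by ring, ?_⟩
    ext c; simp [hx]

theorem phi_seg (p a b x : E3) (ha : a 2 < p 2) (hb : b 2 < p 2) (hx : x ∈ segment ℝ a b) :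
    phi p x ∈ segment ℝ (phi p a) (phi p b) := by
  rw [seg3_iff] at hx
  obtain ⟨t, h0, h1, h⟩ := hx
  have hA : 0 < p 2 - a 2 := by linarith
  have hB : 0 < p 2 - b 2 := by linarith
  have e : p 2 - x 2 = (1 - t) * (p 2 - a 2) + t * (p 2 - b 2) := by rw [h]; ring
  have hX : 0 < p 2 - x 2 := by
    rw [e]
    rcases eq_or_lt_of_le h0 with rfl | h0'
    · simpa using hA
    · have := mul_pos h0' hB
      have := mul_nonneg (sub_nonneg.2 h1) hA.le
      linarith
  have e1 : x 1 - p 1 = (1 - t) * (a 1 - p 1) + t * (b 1 - p 1) := by rw [h]; ring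
  have key : 1 - t * (p 2 - b 2) / (p 2 - x 2) = (1 - t) * (p 2 - a 2) / (p 2 - x 2) := by
    field_simp; linarith
  rw [seg2_iff]
  refine ⟨t * (p 2 - b 2) / (p 2 - x 2), by positivity, ?_, ?_, ?_⟩
  · rw [div_le_one hX, e]
    have := mul_nonneg (sub_nonneg.2 h1) hA.le
    linarith
  · rw [key]; simp only [phi]; rw [e1]; field_simp
  · rw [key]; simp only [phi]; field_simp; ring

theorem psi_seg (p a b : E3) (d : ℝ × ℝ) (ha0 : a 0 = 0) (hb0 : b 0 = 0) (ha : a 2 < p 2)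
    (hb : b 2 < p 2) (hd : d ∈ segment ℝ (phi p a) (phi p b)) : psi p d ∈ segment ℝ a b := by
  rw [seg2_iff] at hd
  obtain ⟨t, h0, h1, e1, e2⟩ := hd
  have hA : 0 < p 2 - a 2 := by linarith
  have hB : 0 < p 2 - b 2 := by linarith
  simp only [phi] at e1 e2
  set A := p 2 - a 2 with hAd
  set B := p 2 - b 2 with hBd
  have hX : 0 < d.2 := by
    rw [e2]
    rcases eq_or_lt_of_le h0 with rfl | h0'
    · simpa using hA
    · have := mul_pos h0' (one_div_pos.2 hB)
      have := mul_nonneg (sub_nonneg.2 h1) (one_div_pos.2 hA).le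
      linarith
  have e2' : d.2 * (A * B) = (1 - t) * B + t * A := by rw [e2]; field_simp
  have e1' : d.1 * (A * B) = (1 - t) * (a 1 - p 1) * B + t * (b 1 - p 1) * A := by
    rw [e1]; field_simp
  have key : 1 - t * (1 / B) / d.2 = (1 - t) * (1 / A) / d.2 := by
    field_simp; linarith
  rw [seg3_iff]
  refine ⟨t * (1 / B) / d.2, by positivity, ?_, ?_⟩
  · rw [div_le_one hX, e2]
    have := mul_nonneg (sub_nonneg.2 h1) (one_div_pos.2 hA).le
    linarith
  · intro c
    rw [key]
    fin_cases c
    · simp [psi, ha0, hb0]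
    · simp only [psi]
      simp
      field_simp
      linear_combination e1' + p 1 * e2'
    · simp only [psi]
      simp
      field_simp
      linear_combination p 2 * e2' - (1 - t) * B * hAd - t * A * hBd

/-- Radial comparison: nearer points on the same ray lie on the segment from the apex. -/
theorem mem_seg_apex (p x y v : E3) (hv : v = ![0, p 1, p 2]) (hx0 : x 0 = 0) (hy0 : y 0 = 0)
    (hx : x 2 < p 2) (hy : y 2 < p 2) (h1 : (phi p x).1 = (phi p y).1)
    (h2 : (phi p y).2 ≤ (phi p x).2) : x ∈ segment ℝ v y := by
  have hX : 0 < p 2 - x 2 := by linarith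
  have hY : 0 < p 2 - y 2 := by linarith
  simp only [phi] at h1 h2
  have h2' : p 2 - x 2 ≤ p 2 - y 2 := (one_div_le_one_div hY hX).1 h2
  have h1' : (x 1 - p 1) * (p 2 - y 2) = (y 1 - p 1) * (p 2 - x 2) := by
    rwa [div_eq_div_iff hX.ne' hY.ne'] at h1
  rw [seg3_iff]
  refine ⟨(p 2 - x 2) / (p 2 - y 2), by positivity, (div_le_one hY).2 h2', ?_⟩
  intro c
  subst hv
  fin_cases c
  · simp [hx0, hy0]
  · simp; field_simp; linear_combination h1'
  · simp; field_simp; ring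

/-- Dilating by `l > 0` from the apex. -/
theorem phi_dilate (p x y : E3) (l : ℝ) (hl : 0 < l) (h1 : y 1 - p 1 = l * (x 1 - p 1))
    (h2 : p 2 - y 2 = l * (p 2 - x 2)) :
    (phi p y).1 = (phi p x).1 ∧ l * (phi p y).2 = (phi p x).2 := by
  simp only [phi]
  rw [h1, h2]
  constructor
  · rw [mul_div_mul_left _ _ hl.ne']
  · have hl' : l ≠ 0 := hl.ne'
    rw [one_div, one_div, mul_inv, mul_inv_cancel_left₀]
    assumption

/-- A point of an edge at the apex. -/
theorem phi_apex_edge (p x y v : E3) (hv : v = ![0, p 1, p 2]) (hx : x 2 < p 2)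
    (h : x ∈ segment ℝ v y) :
    (phi p x).1 = (phi p y).1 ∧ (phi p y).2 ≤ (phi p x).2 := by
  rw [seg3_iff] at h
  obtain ⟨t, h0, h1, h⟩ := h
  subst hv
  have hc1 := h 1
  have hc2 := h 2
  simp at hc1 hc2
  have ht : 0 < t := by
    rcases eq_or_lt_of_le h0 with rfl | h0'
    · simp at hc2; linarith
    · exact h0'
  obtain ⟨a, b⟩ := phi_dilate p y x t ht (by rw [hc1]; ring) (by rw [hc2]; ring)
  have := phi_snd_pos p x hx
  exact ⟨a, by nlinarith⟩

section bridge

variable (p : E3) (n : ℕ) (w : ℕ → E3)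

theorem mem_bdry (x : E3) : x ∈ polyBoundary w n ↔
    ∃ i < n, x ∈ segment ℝ (w i) (w ((i + 1) % n)) := by
  simp [polyBoundary]

theorem bdry_chart (hn : 3 ≤ n) (hw0 : w 0 = ![0, p 1, p 2])
    (hbelow : ∀ i, 0 < i → i < n → w i 2 < p 2) (x : E3) (hx : x 2 < p 2)
    (h : x ∈ polyBoundary w n) :
    (∃ γ ≤ (phi p x).2, ((phi p x).1, γ) ∈ chainSet (fun k => phi p (w (k + 1))) (n - 1)) ∧
    (phi p x ∈ chainSet (fun k => phi p (w (k + 1))) (n - 1) ∨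
      (phi p x).1 = (phi p (w (0 + 1))).1 ∨ (phi p x).1 = (phi p (w (n - 1 - 1 + 1))).1) := by
  rw [mem_bdry] at h
  obtain ⟨i, hi, h⟩ := h
  by_cases hi0 : i = 0
  · subst hi0
    rw [Nat.mod_eq_of_lt (by omega)] at h
    obtain ⟨a, b⟩ := phi_apex_edge p x (w (0 + 1)) (w 0) hw0 hx h
    refine ⟨⟨_, b, ?_⟩, Or.inr (Or.inl a)⟩
    rw [a]
    exact vertex_mem_chain (fun k => phi p (w (k + 1))) (n - 1) (by omega) 0 (by omega)
  by_cases hi1 : i = n - 1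
  · subst hi1
    rw [show (n - 1 + 1) % n = 0 by rw [Nat.sub_add_cancel (by omega)]; simp, segment_symm] at h
    obtain ⟨a, b⟩ := phi_apex_edge p x (w (n - 1)) (w 0) hw0 hx h
    have hv := vertex_mem_chain (fun k => phi p (w (k + 1))) (n - 1) (by omega) (n - 1 - 1) (by omega)
    simp only [show n - 1 - 1 + 1 = n - 1 by omega] at *
    refine ⟨⟨_, b, ?_⟩, Or.inr (Or.inr a)⟩
    rw [a]
    exact hv
  · rw [Nat.mod_eq_of_lt (by omega)] at h
    have := phi_seg p _ _ x (hbelow i (by omega) hi) (hbelow (i + 1) (by omega) (by omega)) h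
    have hK : phi p x ∈ chainSet (fun k => phi p (w (k + 1))) (n - 1) := by
      refine ⟨i - 1, by omega, ?_⟩
      simp only [show i - 1 + 1 = i by omega]
      exact this
    exact ⟨⟨_, le_rfl, hK⟩, Or.inl hK⟩

theorem chain_bdry (hwΓ : ∀ i < n, w i 0 = 0)
    (hbelow : ∀ i, 0 < i → i < n → w i 2 < p 2) (d : ℝ × ℝ)
    (h : d ∈ chainSet (fun k => phi p (w (k + 1))) (n - 1)) :
    psi p d ∈ polyBoundary w n ∧ 0 < d.2 := by
  obtain ⟨k, hk, h⟩ := h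
  constructor
  · rw [mem_bdry]
    refine ⟨k + 1, by omega, ?_⟩
    rw [Nat.mod_eq_of_lt (by omega)]
    exact psi_seg p _ _ d (hwΓ _ (by omega)) (hwΓ _ (by omega)) (hbelow _ (by omega) (by omega))
      (hbelow _ (by omega) (by omega)) h
  · have a1 := phi_snd_pos p _ (hbelow (k + 1) (by omega) (by omega))
    have a2 := phi_snd_pos p _ (hbelow (k + 1 + 1) (by omega) (by omega))
    have := (seg2_fst_bounds h).2.2.1 _ (min_le_left _ _) (min_le_right _ _)
    exact lt_of_lt_of_le (lt_min a1 a2) this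

theorem region_chart (hn : 3 ≤ n) (hw0 : w 0 = ![0, p 1, p 2])
    (hwΓ : ∀ i < n, w i 0 = 0) (hbelow : ∀ i, 0 < i → i < n → w i 2 < p 2)
    (hker : IsKernelVertexAt {v : E3 | v 0 = 0} w n 0) (x : E3) (hx0 : x 0 = 0) (hx : x 2 < p 2) :
    x ∈ polyRegion {v : E3 | v 0 = 0} w n ↔
    ∃ γ ≤ (phi p x).2, ((phi p x).1, γ) ∈ chainSet (fun k => phi p (w (k + 1))) (n - 1) := by
  have c0 : w 0 0 = 0 := by simp [hw0]
  have c1 : w 0 1 = p 1 := by simp [hw0]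
  have c2 : w 0 2 = p 2 := by simp [hw0]
  constructor
  · rintro (h | ⟨-, hxC, hbd⟩)
    · exact (bdry_chart p n w hn hw0 hbelow x hx h).1
    by_cases hray : ∃ l : ℝ, 1 ≤ l ∧ w 0 + l • (x - w 0) ∈ polyBoundary w n
    · obtain ⟨l, hl, hy⟩ := hray
      set y := w 0 + l • (x - w 0) with hyd
      have y1 : y 1 - p 1 = l * (x 1 - p 1) := by
        simp only [hyd, Pi.add_apply, Pi.smul_apply, Pi.sub_apply, smul_eq_mul, c1]; ring
      have y2 : p 2 - y 2 = l * (p 2 - x 2) := by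
        simp only [hyd, Pi.add_apply, Pi.smul_apply, Pi.sub_apply, smul_eq_mul, c2]; ring
      obtain ⟨a, b⟩ := phi_dilate p x y l (by linarith) y1 y2
      have hyb : y 2 < p 2 := by nlinarith
      obtain ⟨γ, hγ, hK⟩ := (bdry_chart p n w hn hw0 hbelow y hyb hy).1
      have := phi_snd_pos p y hyb
      refine ⟨γ, by nlinarith, ?_⟩
      rw [← a]; exact hK
    · exfalso
      push Not at hray
      have hsub : (fun l : ℝ => w 0 + l • (x - w 0)) '' Set.Ici 1 ⊆
          connectedComponentIn ({v : E3 | v 0 = 0} \ polyBoundary w n) x := by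
        apply IsPreconnected.subset_connectedComponentIn
        · exact isPreconnected_Ici.image _ (by fun_prop)
        · exact ⟨1, by simp, by simp⟩
        · rintro _ ⟨l, hl, rfl⟩
          refine ⟨?_, hray l hl⟩
          simp [c0, hx0]
      obtain ⟨B, hB⟩ := (hbd.subset hsub).exists_norm_le
      have hX : 0 < p 2 - x 2 := by linarith
      set l := 1 + (|B| + |p 2| + 1) / (p 2 - x 2) with hl
      have hl1 : 1 ≤ l := by
        have : 0 ≤ (|B| + |p 2| + 1) / (p 2 - x 2) := by positivity
        linarith
      have hle := hB _ ⟨l, hl1, rfl⟩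
      have h2 := (norm_le_pi_norm (w 0 + l • (x - w 0)) 2).trans hle
      rw [Real.norm_eq_abs] at h2
      have h3 := (abs_le.1 h2).1
      have e : (w 0 + l • (x - w 0)) 2 = p 2 - l * (p 2 - x 2) := by
        simp only [Pi.add_apply, Pi.smul_apply, Pi.sub_apply, smul_eq_mul, c2]; ring
      have e' : l * (p 2 - x 2) = (p 2 - x 2) + (|B| + |p 2| + 1) := by rw [hl]; field_simp
      rw [e, e'] at h3
      have := le_abs_self B
      have := le_abs_self (p 2)
      linarith
  · rintro ⟨γ, hγ, hK⟩
    obtain ⟨hC, hpos⟩ := chain_bdry p n w hwΓ hbelow _ hK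
    apply hker _ (Or.inl hC)
    refine mem_seg_apex p x _ _ hw0 hx0 (by simp [psi]) hx (psi_below p _ hpos) ?_ ?_
    · rw [phi_psi p _ hpos]
    · rw [phi_psi p _ hpos]; exact hγ

theorem bdry_closed : IsClosed (polyBoundary w n) := by
  unfold polyBoundary
  refine (Finset.range n).finite_toSet.isClosed_biUnion fun i _ => ?_
  apply IsCompact.isClosed
  rw [segment_eq_image]
  exact isCompact_Icc.image (by fun_prop)

theorem region_open (x : E3) (h : x ∈ polyRegion {v : E3 | v 0 = 0} w n)
    (hx : x ∉ polyBoundary w n) :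
    ∃ ε > 0, ∀ y : E3, y 0 = 0 → dist y x < ε → y ∈ polyRegion {v : E3 | v 0 = 0} w n := by
  rcases h with h | ⟨hx0, -, hbd⟩
  · exact absurd h hx
  obtain ⟨ε, hε, hball⟩ := Metric.isOpen_iff.1 (bdry_closed n w).isOpen_compl x hx
  refine ⟨ε, hε, fun y hy0 hyd => Or.inr ⟨hy0, hball hyd, ?_⟩⟩
  have hconv : Convex ℝ ({v : E3 | v 0 = 0} ∩ Metric.ball x ε) := by
    refine Convex.inter ?_ (convex_ball x ε)
    intro a ha b hb α β _ _ _
    simp only [Set.mem_ofPred_eq] at *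
    simp [ha, hb]
  have hsub : {v : E3 | v 0 = 0} ∩ Metric.ball x ε ⊆
      connectedComponentIn ({v : E3 | v 0 = 0} \ polyBoundary w n) x :=
    hconv.isPreconnected.subset_connectedComponentIn ⟨hx0, Metric.mem_ball_self hε⟩
      (fun z hz => ⟨hz.1, hball hz.2⟩)
  rw [← connectedComponentIn_eq (hsub ⟨hy0, hyd⟩)]
  exact hbd

theorem open_hyp (hn : 3 ≤ n) (hw0 : w 0 = ![0, p 1, p 2])
    (hwΓ : ∀ i < n, w i 0 = 0) (hbelow : ∀ i, 0 < i → i < n → w i 2 < p 2)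
    (hker : IsKernelVertexAt {v : E3 | v 0 = 0} w n 0) :
    OpenHyp (fun k => phi p (w (k + 1))) (n - 1) := by
  intro s g g' hK hgg hnK hs0 hs1
  have hg : 0 < g := lt_of_lt_of_le (chain_bdry p n w hwΓ hbelow _ hK).2 hgg
  have hφ := phi_psi p (s, g) hg
  have hb := psi_below p (s, g) hg
  have hR : psi p (s, g) ∈ polyRegion {v : E3 | v 0 = 0} w n := by
    rw [region_chart p n w hn hw0 hwΓ hbelow hker _ (by simp [psi]) hb, hφ]
    exact ⟨g', hgg, hK⟩
  have hC : psi p (s, g) ∉ polyBoundary w n := by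
    intro h
    have := (bdry_chart p n w hn hw0 hbelow _ hb h).2
    rw [hφ] at this
    rcases this with h | h | h
    · exact hnK h
    · exact hs0 h
    · exact hs1 h
  obtain ⟨ε, hε, hopen⟩ := region_open n w _ hR hC
  have hcont : ContinuousAt (psi p) (s, g) := by
    rw [continuousAt_pi]
    intro c
    fin_cases c
    · exact continuousAt_const
    · exact continuousAt_const.add (continuousAt_fst.div continuousAt_snd hg.ne')
    · exact continuousAt_const.sub (continuousAt_const.div continuousAt_snd hg.ne')
  have hev := (hcont.eventually (Metric.ball_mem_nhds _ hε)).and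
    (continuousAt_snd.eventually (lt_mem_nhds (a := 0) hg))
  obtain ⟨δ, hδ, h⟩ := Metric.eventually_nhds_iff.1 hev
  refine ⟨δ, hδ, fun y1 y2 h1 h2 => ?_⟩
  obtain ⟨a, b⟩ := @h (y1, y2) (by
    rw [Prod.dist_eq, max_lt_iff, Real.dist_eq, Real.dist_eq]; exact ⟨h1, h2⟩)
  have := hopen _ (by simp [psi]) a
  rw [region_chart p n w hn hw0 hwΓ hbelow hker _ (by simp [psi]) (psi_below p _ b),
    phi_psi p _ b] at this
  exact this

theorem simple_hyp (hwΓ : ∀ i < n, w i 0 = 0)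
    (hbelow : ∀ i, 0 < i → i < n → w i 2 < p 2) (hsim : IsSimplePolygon w n) :
    SimpleHyp (fun k => phi p (w (k + 1))) (n - 1) := by
  intro k l x hkl hl hxk hxl
  obtain ⟨_, hinj, hs⟩ := hsim
  have hpos := (chain_bdry p n w hwΓ hbelow x ⟨l, hl, hxl⟩).2
  have m1 := psi_seg p _ _ x (hwΓ (k + 1) (by omega)) (hwΓ (k + 1 + 1) (by omega))
    (hbelow _ (by omega) (by omega)) (hbelow _ (by omega) (by omega)) hxk
  have m2 := psi_seg p _ _ x (hwΓ (l + 1) (by omega)) (hwΓ (l + 1 + 1) (by omega))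
    (hbelow _ (by omega) (by omega)) (hbelow _ (by omega) (by omega)) hxl
  have := hs (k + 1) (by omega) (l + 1) (by omega) (by omega)
  rw [Nat.mod_eq_of_lt (show k + 1 + 1 < n by omega),
    Nat.mod_eq_of_lt (show l + 1 + 1 < n by omega)] at this
  have hm := this.subset ⟨m1, m2⟩
  simp only [Set.mem_inter_iff, Set.mem_insert_iff, Set.mem_singleton_iff] at hm
  have fin : ∀ a b, a < n → b < n → psi p x = w a → psi p x = w b → a = b :=
    fun a b ha hb h1 h2 => hinj a ha b hb (h1.symm.trans h2)
  obtain ⟨h1 | h1, h2 | h2⟩ := hm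
  · have := fin _ _ (by omega) (by omega) h1 h2; omega
  · have := fin _ _ (by omega) (by omega) h1 h2; omega
  · have := fin _ _ (by omega) (by omega) h1 h2
    refine ⟨by omega, ?_⟩
    show x = phi p (w (l + 1))
    rw [← h2, phi_psi p x hpos]
  · have := fin _ _ (by omega) (by omega) h1 h2; omega

theorem slopes_inj (hn : 3 ≤ n) (hw0 : w 0 = ![0, p 1, p 2])
    (hwΓ : ∀ i < n, w i 0 = 0) (hbelow : ∀ i, 0 < i → i < n → w i 2 < p 2)
    (hgp : GeneralPosition w n) (i : ℕ) (hi : i < n - 1) (j : ℕ) (hj : j < n - 1)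
    (h : (phi p (w (i + 1))).1 = (phi p (w (j + 1))).1) : i = j := by
  by_contra hne
  wlog hle : (phi p (w (j + 1))).2 ≤ (phi p (w (i + 1))).2 generalizing i j
  · exact this j hj i hi h.symm (Ne.symm hne) (le_of_not_ge hle)
  have := mem_seg_apex p (w (i + 1)) (w (j + 1)) (w 0) hw0 (hwΓ _ (by omega)) (hwΓ _ (by omega))
    (hbelow _ (by omega) (by omega)) (hbelow _ (by omega) (by omega)) h hle
  exact hgp 0 (by omega) (i + 1) (by omega) (j + 1) (by omega) (by omega) (by omega) (by omega)
    (mem_segment_iff_wbtw.1 this).collinear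

end bridge

theorem proj_coords (p : E3) (f : E3 → E3) (hf : IsCentralProjC p f) (a : E3) (h0 : a 0 = 0)
    (h2 : a 2 < p 2) :
    f a 0 = p 0 * (1 - p 2 * (phi p a).2) ∧ f a 1 = p 1 + p 2 * (phi p a).1 := by
  obtain ⟨hz, t, ht⟩ := hf a h0 h2.ne
  have hA : 0 < p 2 - a 2 := by linarith
  have e2 : p 2 + t * (a 2 - p 2) = 0 := by rw [← hz, ht]; simp
  have et : t = p 2 / (p 2 - a 2) := by field_simp; linarith
  rw [ht]
  constructor
  · simp [phi, h0, et]; field_simp; ring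
  · simp [phi, et]; field_simp

/-- Let `F = (v₀, v₁, …, v_{n-1})` be a convex fan in general position drawn in the plane
`Γ = {x = 0}` with convex kernel vertex `v₀ = (0, p₂, p₃)`, all other vertices having
`z`-coordinate less than `p₃`, and let `T = (f v₁, …, f v_{n-1})` be the resulting
terrain in `Ω = {z = 0}`. Then for all `i, j ∈ {1, …, n-1}`, the vertices `v_i` and `v_j`
see each other in `F` if and only if `f v_i` and `f v_j` see each other in `T`. -/
theorem convex_fan_terrain_visibility
    (p : E3) (hp1 : 0 < p 0) (hp3 : 0 < p 2)
    (f : E3 → E3) (hf : IsCentralProjC p f)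
    (n : ℕ) (w : ℕ → E3)
    (hw0 : w 0 = ![0, p 1, p 2])
    (hwΓ : ∀ i < n, w i 0 = 0)
    (hbelow : ∀ i, 0 < i → i < n → w i 2 < p 2)
    (hfan : IsConvexFanAt {v : E3 | v 0 = 0} w n 0)
    (hgp : GeneralPosition w n) :
    ∀ i j, 1 ≤ i → i < n → 1 ≤ j → j < n → i ≠ j →
      (SeesInPoly {v : E3 | v 0 = 0} w n (w i) (w j) ↔
        SeesInTerrain (fun k => f (w (k + 1))) (n - 1) (i - 1) (j - 1)) := by
  intro i j hi1 hin hj1 hjn hij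
  obtain ⟨hsimple, -, hker⟩ := hfan
  have hn : 3 ≤ n := hsimple.1
  have hs := slopes_inj p n w hn hw0 hwΓ hbelow hgp
  have H := open_hyp p n w hn hw0 hwΓ hbelow hker
  have hsim := simple_hyp p n w hwΓ hbelow hsimple
  obtain ⟨i, rfl⟩ : ∃ k, i = k + 1 := ⟨i - 1, by omega⟩
  obtain ⟨j, rfl⟩ : ∃ k, j = k + 1 := ⟨j - 1, by omega⟩
  have main := planar_main (fun k => phi p (w (k + 1))) (n - 1) (by omega) hs H hsim i j
    (by omega) (by omega) (by omega) (by
      intro k hk hki hkj hmem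
      have := psi_seg p _ _ _ (hwΓ (i + 1) hin) (hwΓ (j + 1) hjn) (hbelow _ (by omega) hin)
        (hbelow _ (by omega) hjn) hmem
      rw [psi_phi p _ (hwΓ (k + 1) (by omega)) (hbelow (k + 1) (by omega) (by omega))] at this
      exact hgp (i + 1) hin (k + 1) (by omega) (j + 1) hjn (by omega) (by omega) (by omega)
        (mem_segment_iff_wbtw.1 this).collinear)
  have hi2 := hbelow (i + 1) (by omega) hin
  have hj2 := hbelow (j + 1) (by omega) hjn
  have hi0 := hwΓ (i + 1) hin
  have hj0 := hwΓ (j + 1) hjn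
  have left : SeesInPoly {v : E3 | v 0 = 0} w n (w (i + 1)) (w (j + 1)) ↔
      ∀ y ∈ segment ℝ (phi p (w (i + 1))) (phi p (w (j + 1))),
        ∃ γ ≤ y.2, (y.1, γ) ∈ chainSet (fun k => phi p (w (k + 1))) (n - 1) := by
    constructor
    · intro h y hy
      have hpos : 0 < y.2 := lt_of_lt_of_le (lt_min (phi_snd_pos p _ hi2) (phi_snd_pos p _ hj2))
        ((seg2_fst_bounds hy).2.2.1 _ (min_le_left _ _) (min_le_right _ _))
      have := h (psi_seg p _ _ y hi0 hj0 hi2 hj2 hy)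
      rw [region_chart p n w hn hw0 hwΓ hbelow hker _ (by simp [psi]) (psi_below p _ hpos),
        phi_psi p _ hpos] at this
      exact this
    · intro h x hx
      obtain ⟨t, t0, t1, hc⟩ := (seg3_iff _ _ _).1 hx
      have hx0 : x 0 = 0 := by rw [hc, hi0, hj0]; simp
      have hx2 : x 2 < p 2 := by
        rw [hc]
        rcases eq_or_lt_of_le t0 with rfl | t0'
        · simpa using hi2
        · have := mul_lt_mul_of_pos_left hj2 t0'
          have := mul_le_mul_of_nonneg_left hi2.le (sub_nonneg.2 t1)
          linarith
      rw [region_chart p n w hn hw0 hwΓ hbelow hker x hx0 hx2]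
      exact h _ (phi_seg p _ _ x hi2 hj2 hx)
  rw [left]
  refine main.trans ?_
  unfold SeesInTerrain
  simp only [Nat.add_sub_cancel]
  refine forall_congr' fun k => forall_congr' fun hk => forall_congr' fun _ =>
    forall_congr' fun _ => not_congr ?_
  obtain ⟨a0, a1⟩ := proj_coords p f hf _ hi0 hi2
  obtain ⟨b0, b1⟩ := proj_coords p f hf _ hj0 hj2
  obtain ⟨c0, c1⟩ := proj_coords p f hf _ (hwΓ (k + 1) (by omega))
    (hbelow (k + 1) (by omega) (by omega))
  unfold OnOrAbove
  refine exists_congr fun t => and_congr_right fun _ => and_congr ?_ ?_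
  · rw [a1, b1, c1]
    constructor
    · intro h; rw [h]; ring
    · intro h
      apply mul_left_cancel₀ hp3.ne'
      linarith
  · rw [a0, b0, c0]
    have hpp := mul_pos hp1 hp3
    rw [← mul_le_mul_iff_right₀ hpp]
    constructor <;> intro h <;> linarith
end
end
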